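/- arXiv:2105.14119 — 9 statements merged into one kernel-verified Lean document; each statement's English description precedes it below -/
import Mathlib

section
/- Let z, x ∈ X^n, let V be a nonempty class of functions X → Y with f ∈ V, and let h : X → Y. Then for every abstention set A* ⊆ {1,…,n} minimizing A ↦ L_x(V, h, A) over all subsets A ⊆ {1,…,n}, one has ℓ_x(f, h, A*) ≤ (c/n)·|{i : x_i ≠ z_i}| + L_z(V, h). -/
open Finset

/-- Selective test loss with abstention set `A`:
`ℓ_x(f,h,A) = (c/n)·|A| + (1/n)·Σ_{i∉A} ℓ(f(x_i), h(x_i))`. -/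
noncomputable def selLoss {X Y : Type*} (ℓ : Y → Y → ℝ) (c : ℝ) {n : ℕ}
    (x : Fin n → X) (f h : X → Y) (A : Finset (Fin n)) : ℝ :=
  c / (n : ℝ) * (A.card : ℝ) + (1 / (n : ℝ)) * ∑ i ∈ Aᶜ, ℓ (f (x i)) (h (x i))

/-- `L_x(V,h,A) = sup_{g ∈ V} ℓ_x(g,h,A)`. -/
noncomputable def worstSelLoss {X Y : Type*} (ℓ : Y → Y → ℝ) (c : ℝ) {n : ℕ}
    (x : Fin n → X) (V : Set (X → Y)) (h : X → Y) (A : Finset (Fin n)) : ℝ :=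
  ⨆ g ∈ V, selLoss ℓ c x g h A

/-- `L_z(V,h) = sup_{g ∈ V} (1/n)·Σ_i ℓ(g(z_i), h(z_i))`. -/
noncomputable def worstLoss {X Y : Type*} (ℓ : Y → Y → ℝ) {n : ℕ}
    (z : Fin n → X) (V : Set (X → Y)) (h : X → Y) : ℝ :=
  ⨆ g ∈ V, (1 / (n : ℝ)) * ∑ i, ℓ (g (z i)) (h (z i))

theorem aux_le_biSup {α : Type*} (V : Set α) (F : α → ℝ) (B : ℝ)
    (h1 : ∀ a, F a ≤ B) (f : α) (hf : f ∈ V) : F f ≤ ⨆ g ∈ V, F g := by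
  have hb : BddAbove (Set.range fun g => ⨆ _ : g ∈ V, F g) := by
    refine ⟨max B 0, ?_⟩
    rintro _ ⟨g, rfl⟩
    exact Real.iSup_le (fun _ => (h1 g).trans (le_max_left _ _)) (le_max_right _ _)
  have := le_ciSup hb f
  simpa [hf] using this

theorem stmt_0 {X Y : Type*} [Countable X] [DecidableEq X]
    (ℓ : Y → Y → ℝ) (hℓ : ∀ y y', ℓ y y' ∈ Set.Icc (0 : ℝ) 1)
    (c : ℝ) (hc : c ∈ Set.Ioc (0 : ℝ) 1) {n : ℕ} (hn : 0 < n)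
    (z x : Fin n → X) (V : Set (X → Y)) (hV : V.Nonempty)
    (f : X → Y) (hf : f ∈ V) (h : X → Y)
    (Astar : Finset (Fin n))
    (hmin : ∀ A : Finset (Fin n),
      worstSelLoss ℓ c x V h Astar ≤ worstSelLoss ℓ c x V h A) :
    selLoss ℓ c x f h Astar ≤
      c / (n : ℝ) * ((univ.filter fun i => x i ≠ z i).card : ℝ) + worstLoss ℓ z V h := by
  obtain ⟨hc0, hc1⟩ := hc
  have hn' : (0 : ℝ) < n := by exact_mod_cast hn
  have hl0 : ∀ y y', 0 ≤ ℓ y y' := fun y y' => (hℓ y y').1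
  have hl1 : ∀ y y', ℓ y y' ≤ 1 := fun y y' => (hℓ y y').2
  have hsum : ∀ (w : Fin n → X) (g : X → Y) (S : Finset (Fin n)),
      ∑ i ∈ S, ℓ (g (w i)) (h (w i)) ≤ n := by
    intro w g S
    calc ∑ i ∈ S, ℓ (g (w i)) (h (w i)) ≤ ∑ i : Fin n, ℓ (g (w i)) (h (w i)) :=
          Finset.sum_le_sum_of_subset_of_nonneg (Finset.subset_univ _) (fun _ _ _ => hl0 _ _)
      _ ≤ ∑ i : Fin n, (1 : ℝ) := Finset.sum_le_sum (fun _ _ => hl1 _ _)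
      _ = n := by simp
  have hL : ∀ g ∈ V, (1 / (n : ℝ)) * ∑ i, ℓ (g (z i)) (h (z i)) ≤ worstLoss ℓ z V h := by
    intro g hg
    refine aux_le_biSup V (fun g => (1 / (n : ℝ)) * ∑ i, ℓ (g (z i)) (h (z i)))
      ((1 / (n : ℝ)) * n) (fun a => ?_) g hg
    exact mul_le_mul_of_nonneg_left (hsum _ _ _) (by positivity)
  have hL0 : 0 ≤ worstLoss ℓ z V h :=
    le_trans (mul_nonneg (by positivity) (Finset.sum_nonneg fun _ _ => hl0 _ _)) (hL f hf)
  have h1 : selLoss ℓ c x f h Astar ≤ worstSelLoss ℓ c x V h Astar := by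
    refine aux_le_biSup V (fun g => selLoss ℓ c x g h Astar)
      (c / (n : ℝ) * (Astar.card : ℝ) + (1 / (n : ℝ)) * n) (fun a => ?_) f hf
    exact add_le_add le_rfl (mul_le_mul_of_nonneg_left (hsum _ _ _) (by positivity))
  refine h1.trans ((hmin (univ.filter fun i => x i ≠ z i)).trans ?_)
  have hM : 0 ≤ c / (n : ℝ) * ((univ.filter fun i => x i ≠ z i).card : ℝ) + worstLoss ℓ z V h :=
    add_nonneg (by positivity) hL0
  refine Real.iSup_le (fun g => Real.iSup_le (fun hg => ?_) hM) hM
  refine add_le_add le_rfl (le_trans ?_ (hL g hg))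
  refine mul_le_mul_of_nonneg_left ?_ (by positivity)
  calc ∑ i ∈ (univ.filter fun i => x i ≠ z i)ᶜ, ℓ (g (x i)) (h (x i))
      = ∑ i ∈ (univ.filter fun i => x i ≠ z i)ᶜ, ℓ (g (z i)) (h (z i)) := by
        refine Finset.sum_congr rfl fun i hi => ?_
        have : x i = z i := by simpa using hi
        rw [this]
    _ ≤ _ := Finset.sum_le_sum_of_subset_of_nonneg (Finset.subset_univ _) (fun _ _ _ => hl0 _ _)
end

section
/- Let P and Q be probability distributions on the countable set X, let V be a nonempty class of functions X → Y with f ∈ V, and let h : X → Y. Then E_{x ~ Q^n}[ min_{A ⊆ {1,…,n}} L_x(V, h, A) ] ≤ c·|P − Q|_TV + E_{z ~ P^n}[ L_z(V, h) ]. Consequently, E_{x ~ Q^n}[ ℓ_x(f, h, A*) ] ≤ c·|P − Q|_TV + E_{z ~ P^n}[ L_z(V, h) ], where for each x, A* denotes any minimizer of A ↦ L_x(V, h, A) over subsets of {1,…,n} (the bound holds simultaneously for all such minimizers, i.e., for the worst one). -/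
open Finset MeasureTheory

/-- Total variation distance between two distributions on a countable space. -/
noncomputable def tvDist {X : Type*} (P Q : PMF X) : ℝ :=
  (1 / 2) * ∑' a : X, |(P a).toReal - (Q a).toReal|

section Helpers

theorem aux_cbi {G : Type*} (V : Set G) (F : G → ℝ) (B : ℝ) (h0 : ∀ g, 0 ≤ F g)
    (hB : ∀ g ∈ V, F g ≤ B) (hB0 : 0 ≤ B) : (⨆ g ∈ V, F g) ≤ B :=
  Real.iSup_le (fun g => Real.iSup_le (fun hg => hB g hg) hB0) hB0

theorem aux_le {G : Type*} (V : Set G) (F : G → ℝ) (B : ℝ) (h0 : ∀ g, 0 ≤ F g)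
    (hB : ∀ g ∈ V, F g ≤ B) (hB0 : 0 ≤ B) (g : G) (hg : g ∈ V) : F g ≤ ⨆ g ∈ V, F g := by
  have h1 : BddAbove (Set.range fun g => ⨆ (_ : g ∈ V), F g) := by
    refine ⟨B, ?_⟩
    rintro _ ⟨g, rfl⟩
    exact Real.iSup_le (fun hg => hB g hg) hB0
  refine le_trans ?_ (le_ciSup h1 g)
  simp [hg]

theorem aux_nonneg {G : Type*} (V : Set G) (F : G → ℝ) (h0 : ∀ g, 0 ≤ F g) :
    0 ≤ ⨆ g ∈ V, F g :=
  Real.iSup_nonneg (fun g => Real.iSup_nonneg (fun _ => h0 g))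

theorem exists_coupling {X : Type*} [Countable X] [MeasurableSpace X]
    [DiscreteMeasurableSpace X] (P Q : PMF X) :
    ∃ κ : Measure (X × X), κ.map Prod.fst = P.toMeasure ∧ κ.map Prod.snd = Q.toMeasure ∧
      κ.real {w | w.1 ≠ w.2} ≤ tvDist P Q := by
  have key : ∀ (R : PMF X), R.toMeasure = Measure.count.withDensity R := by
    intro R
    refine Measure.ext_of_singleton fun a => ?_
    rw [PMF.toMeasure_apply_singleton _ _ (MeasurableSet.singleton a),
      withDensity_apply _ (MeasurableSet.singleton a)]
    simp
  set m : X → ENNReal := fun a => min (P a) (Q a) with hm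
  set p : X → ENNReal := fun a => P a - m a with hp
  set q : X → ENNReal := fun a => Q a - m a with hq
  have hmP : ∀ a, m a + p a = P a := fun a => add_tsub_cancel_of_le (min_le_left _ _)
  have hmQ : ∀ a, m a + q a = Q a := fun a => add_tsub_cancel_of_le (min_le_right _ _)
  have sP : ∑' a, m a + ∑' a, p a = 1 := by
    rw [← ENNReal.tsum_add]; simp only [hmP]; exact P.tsum_coe
  have sQ : ∑' a, m a + ∑' a, q a = 1 := by
    rw [← ENNReal.tsum_add]; simp only [hmQ]; exact Q.tsum_coe
  set T := ∑' a, p a with hT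
  have hmt : ∑' a, m a ≠ ⊤ := fun hh => by simp [hh] at sP
  have hTt : T ≠ ⊤ := fun hh => by simp [hh] at sP
  have hqT : ∑' a, q a = T := by
    have := sQ.trans sP.symm
    exact (ENNReal.add_right_inj hmt).1 this
  set μm := (Measure.count : Measure X).withDensity m with hμm
  set μp := (Measure.count : Measure X).withDensity p with hμp
  set μq := (Measure.count : Measure X).withDensity q with hμq
  have hPm : P.toMeasure = μm + μp := by
    rw [key, hμm, hμp, ← withDensity_add_left Measurable.of_discrete]
    congr 1; ext a; simp [hmP]
  have hQm : Q.toMeasure = μm + μq := by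
    rw [key, hμm, hμq, ← withDensity_add_left Measurable.of_discrete]
    congr 1; ext a; simp [hmQ]
  have upu : μp Set.univ = T := by
    rw [hμp, withDensity_apply _ MeasurableSet.univ]; simp [lintegral_count, hT]
  have uqu : μq Set.univ = T := by
    rw [hμq, withDensity_apply _ MeasurableSet.univ]; simp [lintegral_count, hqT]
  haveI : IsFiniteMeasure μp := ⟨by rw [upu]; exact hTt.lt_top⟩
  haveI : IsFiniteMeasure μq := ⟨by rw [uqu]; exact hTt.lt_top⟩
  have hdiag : Measurable (fun a : X => (a, a)) := Measurable.of_discrete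
  have hTTp : (T⁻¹ * T) • μp = μp := by
    by_cases h0 : T = 0
    · have : μp = 0 := Measure.measure_univ_eq_zero.1 (upu.trans h0)
      simp [this]
    · rw [ENNReal.inv_mul_cancel h0 hTt, one_smul]
  have hTTq : (T⁻¹ * T) • μq = μq := by
    by_cases h0 : T = 0
    · have : μq = 0 := Measure.measure_univ_eq_zero.1 (uqu.trans h0)
      simp [this]
    · rw [ENNReal.inv_mul_cancel h0 hTt, one_smul]
  refine ⟨μm.map (fun a => (a, a)) + T⁻¹ • μp.prod μq, ?_, ?_, ?_⟩
  · rw [Measure.map_add _ _ measurable_fst, Measure.map_smul, Measure.map_fst_prod, uqu,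
      smul_smul, hTTp, Measure.map_map measurable_fst hdiag, hPm]
    congr 1
    exact Measure.map_id
  · rw [Measure.map_add _ _ measurable_snd, Measure.map_smul, Measure.map_snd_prod, upu,
      smul_smul, hTTq, Measure.map_map measurable_snd hdiag, hQm]
    congr 1
    exact Measure.map_id
  · have h1 : (μm.map (fun a => (a, a)) + T⁻¹ • μp.prod μq) {w : X × X | w.1 ≠ w.2} ≤ T := by
      rw [Measure.add_apply, Measure.map_apply hdiag (MeasurableSet.of_discrete)]
      simp only [Set.preimage_ofPred_eq, ne_eq, not_true_eq_false, Set.ofPred_false,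
        measure_empty, zero_add, Measure.smul_apply, smul_eq_mul]
      calc _ ≤ T⁻¹ * (μp.prod μq) Set.univ := by gcongr; exact Set.subset_univ _
        _ = T⁻¹ * (T * T) := by
            rw [← Set.univ_prod_univ, Measure.prod_prod, upu, uqu]
        _ = (T⁻¹ * T) * T := by ring
        _ ≤ 1 * T := by gcongr; exact ENNReal.inv_mul_le_one T
        _ = T := one_mul _
    refine (ENNReal.toReal_mono hTt h1).trans (le_of_eq ?_)
    have hpt : ∀ a, p a ≠ ⊤ := fun a => ENNReal.ne_top_of_tsum_ne_top hTt a
    have hqt : ∀ a, q a ≠ ⊤ := fun a => ENNReal.ne_top_of_tsum_ne_top (hqT ▸ hTt) a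
    have e : ∀ a, |(P a).toReal - (Q a).toReal| = (p a + q a).toReal := by
      intro a
      rcases le_total (P a) (Q a) with hl | hl
      · have : (P a).toReal ≤ (Q a).toReal := ENNReal.toReal_mono (Q.apply_ne_top a) hl
        simp only [hp, hq, hm, min_eq_left hl, tsub_self, zero_add]
        rw [ENNReal.toReal_sub_of_le hl (Q.apply_ne_top a), abs_of_nonpos (by linarith)]
        ring
      · have : (Q a).toReal ≤ (P a).toReal := ENNReal.toReal_mono (P.apply_ne_top a) hl
        simp only [hp, hq, hm, min_eq_right hl, tsub_self, add_zero]
        rw [ENNReal.toReal_sub_of_le hl (P.apply_ne_top a), abs_of_nonneg (by linarith)]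
    unfold tvDist
    simp only [e]
    rw [← ENNReal.tsum_toReal_eq (fun a => ENNReal.add_ne_top.2 ⟨hpt a, hqt a⟩),
      ENNReal.tsum_add, hqT, ← hT, ENNReal.toReal_add hTt hTt]
    ring

theorem aux_integrable {X : Type*} [Countable X] [MeasurableSpace X]
    [DiscreteMeasurableSpace X] (μ : Measure X) [IsFiniteMeasure μ] (F : X → ℝ) (B : ℝ)
    (h0 : ∀ x, 0 ≤ F x) (hB : ∀ x, F x ≤ B) : Integrable F μ := by
  refine Integrable.of_bound (Measurable.of_discrete.aestronglyMeasurable) B ?_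
  refine Filter.Eventually.of_forall fun x => ?_
  rw [Real.norm_eq_abs, abs_of_nonneg (h0 x)]
  exact hB x

end Helpers

theorem stmt_2 {X Y : Type*} [Countable X] [MeasurableSpace X] [DiscreteMeasurableSpace X]
    (ℓ : Y → Y → ℝ) (hℓ : ∀ y y', ℓ y y' ∈ Set.Icc (0 : ℝ) 1)
    (c : ℝ) (hc : c ∈ Set.Ioc (0 : ℝ) 1) {n : ℕ} (hn : 0 < n)
    (P Q : PMF X) (V : Set (X → Y)) (hV : V.Nonempty)
    (f : X → Y) (hf : f ∈ V) (h : X → Y)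
    (Astar : (Fin n → X) → Finset (Fin n))
    (hAstar : ∀ (x : Fin n → X) (A : Finset (Fin n)),
      worstSelLoss ℓ c x V h (Astar x) ≤ worstSelLoss ℓ c x V h A) :
    (∫ x : Fin n → X, (⨅ A : Finset (Fin n), worstSelLoss ℓ c x V h A)
        ∂(Measure.pi fun _ => Q.toMeasure)) ≤
      c * tvDist P Q +
        ∫ z : Fin n → X, worstLoss ℓ z V h ∂(Measure.pi fun _ => P.toMeasure) ∧
    (∫ x : Fin n → X, selLoss ℓ c x f h (Astar x)
        ∂(Measure.pi fun _ => Q.toMeasure)) ≤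
      c * tvDist P Q +
        ∫ z : Fin n → X, worstLoss ℓ z V h ∂(Measure.pi fun _ => P.toMeasure) := by
  classical
  obtain ⟨hc0, hc1⟩ := hc
  have hn' : (0 : ℝ) < n := by exact_mod_cast hn
  have l0 : ∀ y y', 0 ≤ ℓ y y' := fun y y' => (hℓ y y').1
  have l1 : ∀ y y', ℓ y y' ≤ 1 := fun y y' => (hℓ y y').2
  have s0 : ∀ (x : Fin n → X) g A, 0 ≤ selLoss ℓ c x g h A := by
    intro x g A
    unfold selLoss
    have := Finset.sum_nonneg (fun i (_ : i ∈ Aᶜ) => l0 (g (x i)) (h (x i)))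
    positivity
  have m1 : ∀ (x : Fin n → X) (g : X → Y), (1 / (n : ℝ)) * ∑ i, ℓ (g (x i)) (h (x i)) ≤ 1 := by
    intro x g
    have : ∑ i, ℓ (g (x i)) (h (x i)) ≤ n := by
      refine (Finset.sum_le_sum (fun i _ => l1 (g (x i)) (h (x i)))).trans ?_
      simp
    rw [one_div, inv_mul_le_iff₀ hn']
    linarith
  have m0 : ∀ (x : Fin n → X) (g : X → Y),
      0 ≤ (1 / (n : ℝ)) * ∑ i, ℓ (g (x i)) (h (x i)) := by
    intro x g
    have := Finset.sum_nonneg (fun i (_ : i ∈ Finset.univ) => l0 (g (x i)) (h (x i)))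
    positivity
  have w0 : ∀ (x : Fin n → X), 0 ≤ worstLoss ℓ x V h := fun x => aux_nonneg V _ (m0 x)
  have w1 : ∀ (x : Fin n → X), worstLoss ℓ x V h ≤ 1 := fun x =>
    aux_cbi V _ 1 (m0 x) (fun g _ => m1 x g) zero_le_one
  have wle : ∀ (x : Fin n → X), ∀ g ∈ V,
      (1 / (n : ℝ)) * ∑ i, ℓ (g (x i)) (h (x i)) ≤ worstLoss ℓ x V h := fun x g hg =>
    aux_le V _ 1 (m0 x) (fun g _ => m1 x g) zero_le_one g hg
  -- the key pointwise bound
  have key : ∀ (x z : Fin n → X), worstSelLoss ℓ c x V h (univ.filter fun i => z i ≠ x i) ≤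
      c / n * ((univ.filter fun i => z i ≠ x i).card : ℝ) + worstLoss ℓ z V h := by
    intro x z
    have := w0 z
    refine aux_cbi V _ _ (fun g => s0 x g _) (fun g hg => ?_) (by positivity)
    unfold selLoss
    refine add_le_add le_rfl (le_trans ?_ (wle z g hg))
    refine mul_le_mul_of_nonneg_left ?_ (by positivity)
    refine le_trans (le_of_eq ?_) (Finset.sum_le_sum_of_subset_of_nonneg
      (Finset.subset_univ (univ.filter fun i => z i ≠ x i)ᶜ) (fun i _ _ => l0 _ _))
    refine Finset.sum_congr rfl fun i hi => ?_
    have : z i = x i := by simpa using hi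
    rw [this]
  have ws0 : ∀ (x : Fin n → X) A, 0 ≤ worstSelLoss ℓ c x V h A := fun x A =>
    aux_nonneg V _ (fun g => s0 x g A)
  have bdd : ∀ (x : Fin n → X),
      BddBelow (Set.range fun A => worstSelLoss ℓ c x V h A) := by
    intro x
    refine ⟨0, ?_⟩
    rintro _ ⟨A, rfl⟩
    exact ws0 x A
  have F0 : ∀ (x : Fin n → X), 0 ≤ ⨅ A, worstSelLoss ℓ c x V h A := fun x =>
    Real.iInf_nonneg (ws0 x)
  have F1 : ∀ (x : Fin n → X), (⨅ A, worstSelLoss ℓ c x V h A) ≤ 1 := by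
    intro x
    refine (ciInf_le (bdd x) _).trans ((key x x).trans ?_)
    simpa using w1 x
  have sle : ∀ (x : Fin n → X),
      selLoss ℓ c x f h (Astar x) ≤ ⨅ A, worstSelLoss ℓ c x V h A := by
    intro x
    refine le_ciInf fun A => le_trans ?_ (hAstar x A)
    refine aux_le V _ (c / n * ((Astar x).card : ℝ) + 1) (fun g => s0 x g _) (fun g _ => ?_)
      (by positivity) f hf
    unfold selLoss
    refine add_le_add le_rfl (le_trans ?_ (m1 x g))
    refine mul_le_mul_of_nonneg_left ?_ (by positivity)
    exact Finset.sum_le_sum_of_subset_of_nonneg (Finset.subset_univ _) (fun i _ _ => l0 _ _)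
  have main : (∫ x : Fin n → X, (⨅ A : Finset (Fin n), worstSelLoss ℓ c x V h A)
        ∂(Measure.pi fun _ => Q.toMeasure)) ≤
      c * tvDist P Q +
        ∫ z : Fin n → X, worstLoss ℓ z V h ∂(Measure.pi fun _ => P.toMeasure) := by
    obtain ⟨κ, hP, hQ, hT⟩ := exists_coupling P Q
    haveI : IsProbabilityMeasure κ := by
      refine ⟨?_⟩
      have : κ.map Prod.fst Set.univ = 1 := by rw [hP]; exact measure_univ
      rwa [Measure.map_apply measurable_fst MeasurableSet.univ, Set.preimage_univ] at this
    haveI : IsProbabilityMeasure (κ.map Prod.fst) := by rw [hP]; infer_instance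
    haveI : IsProbabilityMeasure (κ.map Prod.snd) := by rw [hQ]; infer_instance
    set π : Measure (Fin n → X × X) := Measure.pi fun _ => κ with hπ
    have eP : (Measure.pi fun _ : Fin n => P.toMeasure) = π.map (fun w i => (w i).1) := by
      rw [← hP, hπ, Measure.pi_map_pi (fun _ => measurable_fst.aemeasurable)]
    have eQ : (Measure.pi fun _ : Fin n => Q.toMeasure) = π.map (fun w i => (w i).2) := by
      rw [← hQ, hπ, Measure.pi_map_pi (fun _ => measurable_snd.aemeasurable)]
    rw [eP, eQ, integral_map Measurable.of_discrete.aemeasurable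
        Measurable.of_discrete.aestronglyMeasurable,
      integral_map Measurable.of_discrete.aemeasurable
        Measurable.of_discrete.aestronglyMeasurable]
    let D : Set (X × X) := {w | w.1 ≠ w.2}
    have iI : ∀ i : Fin n, Integrable (fun w : Fin n → X × X => D.indicator (fun _ => (1:ℝ)) (w i)) π :=
      fun i => aux_integrable π _ 1 (fun w => Set.indicator_nonneg (fun _ _ => zero_le_one) _)
        (fun w => Set.indicator_le_self' (fun _ _ => zero_le_one) _)
    have iW : Integrable (fun w : Fin n → X × X => worstLoss ℓ (fun i => (w i).1) V h) π :=
      aux_integrable π _ 1 (fun w => w0 _) (fun w => w1 _)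
    have iS : Integrable (fun w : Fin n → X × X =>
        c / n * ∑ i, D.indicator (fun _ => (1:ℝ)) (w i)) π :=
      (integrable_finsetSum _ (fun i _ => iI i)).const_mul _
    have hi : ∀ i : Fin n, ∫ w, D.indicator (fun _ => (1:ℝ)) (w i) ∂π = κ.real D := by
      intro i
      have hmp : MeasurePreserving (fun w : Fin n → X × X => w i) π κ :=
        measurePreserving_eval (fun _ => κ) i
      rw [← integral_map (φ := fun w : Fin n → X × X => w i)
        (f := D.indicator (fun _ => (1:ℝ))) hmp.measurable.aemeasurable
        Measurable.of_discrete.aestronglyMeasurable, hmp.map_eq,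
        integral_indicator_const _ MeasurableSet.of_discrete]
      simp
    calc _ ≤ ∫ w, (c / n * ∑ i, D.indicator (fun _ => (1:ℝ)) (w i)
            + worstLoss ℓ (fun i => (w i).1) V h) ∂π := by
          refine integral_mono (aux_integrable π _ 1 (fun w => F0 _) (fun w => F1 _))
            (iS.add iW) (fun w => ?_)
          refine (ciInf_le (bdd _) _).trans
            ((key (fun i => (w i).2) (fun i => (w i).1)).trans (le_of_eq ?_))
          simp only [D, Set.indicator_apply, Set.mem_ofPred_eq]
          rw [Finset.sum_boole]
      _ = c * κ.real D + ∫ w, worstLoss ℓ (fun i => (w i).1) V h ∂π := by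
          rw [integral_add iS iW, integral_const_mul, integral_finsetSum _ (fun i _ => iI i)]
          simp only [hi]
          simp
          field_simp
      _ ≤ _ := by
          have := mul_le_mul_of_nonneg_left hT hc0.le
          exact add_le_add this le_rfl
  refine ⟨main, le_trans ?_ main⟩
  exact integral_mono (aux_integrable _ _ 1 (fun x => s0 x _ _) (fun x => (sle x).trans (F1 x)))
    (aux_integrable _ _ 1 F0 F1) sle
end

section
/- Let P and Q be probability distributions on the countable set X, let V be a nonempty class of functions X → Y with f ∈ V, and let h : X → Y. Then for every real k ≥ 1: E_{x ~ Q^n}[ min_{A ⊆ {1,…,n}} L_x(V, h, A) ] ≤ c·D_k(P‖Q) + k·E_{z ~ P^n}[ L_z(V, h) ]. In particular, E_{x ~ Q^n}[ ℓ_x(f, h, A*) ] ≤ min_{k ≥ 1} ( c·D_k(P‖Q) + k·E_{z ~ P^n}[ L_z(V, h) ] ), where for each x the bound holds simultaneously for every minimizer A* of A ↦ L_x(V, h, A) over subsets of {1,…,n}. -/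
open Finset MeasureTheory

/-- The divergence `D_k(P‖Q) = Σ_x max(Q(x) − k·P(x), 0)`. -/
noncomputable def Dk {X : Type*} (P Q : PMF X) (k : ℝ) : ℝ :=
  ∑' a : X, max ((Q a).toReal - k * (P a).toReal) 0

instance optMS {X : Type*} : MeasurableSpace (Option X) := ⊤

/-- Suprema over a class, of functions bounded above, are bounded above. -/
lemma bis_le {α : Type*} {V : Set α} {φ : α → ℝ} {C : ℝ} (hC : 0 ≤ C)
    (h : ∀ g ∈ V, φ g ≤ C) : ⨆ g ∈ V, φ g ≤ C :=
  Real.iSup_le (fun g => Real.iSup_le (h g) hC) hC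

lemma le_bis {α : Type*} {V : Set α} {φ : α → ℝ} {C : ℝ} (hC : 0 ≤ C)
    (h : ∀ g ∈ V, φ g ≤ C) {g : α} (hg : g ∈ V) : φ g ≤ ⨆ g ∈ V, φ g := by
  refine le_ciSup_of_le (f := fun g => ⨆ (_ : g ∈ V), φ g) ⟨C, ?_⟩ g ?_
  · rintro _ ⟨a, rfl⟩
    exact Real.iSup_le (h a) hC
  · rw [ciSup_pos hg]

lemma bis_nonneg {α : Type*} {V : Set α} {φ : α → ℝ}
    (h : ∀ g ∈ V, 0 ≤ φ g) : 0 ≤ ⨆ g ∈ V, φ g :=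
  Real.iSup_nonneg fun g => Real.iSup_nonneg (h g)

lemma integrable_disc {Ω : Type*} [Countable Ω] [MeasurableSpace Ω] [DiscreteMeasurableSpace Ω]
    (μ : Measure Ω) [IsFiniteMeasure μ] (φ : Ω → ℝ) (C : ℝ) (h0 : ∀ a, 0 ≤ φ a)
    (h1 : ∀ a, φ a ≤ C) : Integrable φ μ := by
  refine Integrable.of_bound (Measurable.of_discrete).aestronglyMeasurable C ?_
  refine Filter.Eventually.of_forall fun a => ?_
  rw [Real.norm_of_nonneg (h0 a)]
  exact h1 a

/-- probability measures on `Option X` agreeing on `some x` are equal. -/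
lemma opt_ext {X : Type*} [Countable X] (μ ν : Measure (Option X)) [IsProbabilityMeasure μ]
    [IsProbabilityMeasure ν] (h : ∀ x, μ {some x} = ν {some x}) : μ = ν := by
  have key : ∀ ρ : Measure (Option X), ρ (Set.range some) = ∑' x, ρ {some x} := by
    intro ρ
    rw [← Set.iUnion_singleton_eq_range, measure_iUnion]
    · intro a b hab
      simpa [Function.onFun] using hab
    · intro i
      exact MeasurableSet.of_discrete
  refine Measure.ext_of_singleton ?_
  rintro (_ | x)
  · have e : ({none} : Set (Option X)) = (Set.range some)ᶜ := by
      ext a; cases a <;> simp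
    rw [e, prob_compl_eq_one_sub MeasurableSet.of_discrete,
      prob_compl_eq_one_sub MeasurableSet.of_discrete, key, key]
    simp_rw [h]
  · exact h x

/-- Marked pair to option. -/
def mark {X : Type*} (u : X × Bool) : Option X := if u.2 then some u.1 else none

lemma exists_marked {X : Type*} [Countable X] [MeasurableSpace X] [DiscreteMeasurableSpace X]
    (P : PMF X) (p : X → ENNReal) (hp : ∀ x, p x ≤ P x) :
    ∃ μ : Measure (X × Bool), IsProbabilityMeasure μ ∧ μ.map Prod.fst = P.toMeasure ∧
      (∀ x, μ.map mark {some x} = p x) ∧ μ {u | u.2 = false} = ∑' x, (P x - p x) := by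
  have hs : ∑' u : X × Bool, (if u.2 then p u.1 else P u.1 - p u.1) = 1 := by
    rw [ENNReal.tsum_prod', ← P.tsum_coe]
    refine tsum_congr fun x => ?_
    rw [tsum_bool]
    simp [tsub_add_cancel_of_le (hp x)]
  let μ : PMF (X × Bool) := ⟨fun u => if u.2 then p u.1 else P u.1 - p u.1,
    hs ▸ ENNReal.summable.hasSum⟩
  have hμ : ∀ u, μ u = if u.2 then p u.1 else P u.1 - p u.1 := fun u => rfl
  have hset : ∀ s : Set (X × Bool), μ.toMeasure s = ∑' x, ∑' b, s.indicator μ (x, b) := by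
    intro s
    rw [μ.toMeasure_apply_eq_tsum, ENNReal.tsum_prod']
  refine ⟨μ.toMeasure, inferInstance, ?_, ?_, ?_⟩
  · refine Measure.ext_of_singleton fun x => ?_
    rw [Measure.map_apply Measurable.of_discrete (MeasurableSet.of_discrete), hset,
      P.toMeasure_apply_singleton _ (measurableSet_singleton x), tsum_eq_single x]
    · simp [Set.indicator, hμ, add_tsub_cancel_of_le (hp x)]
    · intro y hy
      simp [tsum_bool, Set.indicator, hy]
  · intro x
    rw [Measure.map_apply Measurable.of_discrete (MeasurableSet.of_discrete), hset,
      tsum_eq_single x]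
    · simp [tsum_bool, Set.indicator, hμ, mark]
    · intro y hy
      simp [tsum_bool, Set.indicator, hy, mark]
  · rw [hset]
    refine tsum_congr fun x => ?_
    simp [tsum_bool, Set.indicator, hμ]

/-- The loss functional on partially erased samples. -/
noncomputable def optF {G X : Type*} (V : Set G) (a : G → X → ℝ) {n : ℕ}
    (v : Fin n → Option X) : ℝ :=
  ⨆ g ∈ V, ∑ i, (v i).elim 0 (a g)

lemma elim_mem {G X : Type*} {a : G → X → ℝ} (ha : ∀ g x, a g x ∈ Set.Icc (0 : ℝ) 1)
    (g : G) (o : Option X) : o.elim 0 (a g) ∈ Set.Icc (0 : ℝ) 1 := by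
  cases o with
  | none => simp
  | some x => exact ha g x

lemma sum_le_n {n : ℕ} {b : Fin n → ℝ} (hb : ∀ i, b i ∈ Set.Icc (0 : ℝ) 1) :
    ∑ i, b i ≤ n := by
  have := Finset.sum_le_sum (s := Finset.univ) fun i _ => (hb i).2
  simpa using this

lemma optF_nonneg {G X : Type*} (V : Set G) {a : G → X → ℝ}
    (ha : ∀ g x, a g x ∈ Set.Icc (0 : ℝ) 1) {n : ℕ} (v : Fin n → Option X) : 0 ≤ optF V a v :=
  bis_nonneg fun g _ => Finset.sum_nonneg fun i _ => (elim_mem ha g (v i)).1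

lemma optF_le {G X : Type*} (V : Set G) {a : G → X → ℝ}
    (ha : ∀ g x, a g x ∈ Set.Icc (0 : ℝ) 1) {n : ℕ} (v : Fin n → Option X) : optF V a v ≤ n :=
  bis_le n.cast_nonneg fun g _ => sum_le_n fun i => elim_mem ha g (v i)

lemma le_optF {G X : Type*} (V : Set G) {a : G → X → ℝ}
    (ha : ∀ g x, a g x ∈ Set.Icc (0 : ℝ) 1) {n : ℕ} (v : Fin n → Option X) {g : G} (hg : g ∈ V) :
    ∑ i, (v i).elim 0 (a g) ≤ optF V a v :=
  le_bis n.cast_nonneg (fun g _ => sum_le_n fun i => elim_mem ha g (v i)) hg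

/-- Thinning. -/
def thin {X : Type*} (u : Option X × Bool) : Option X := if u.2 then u.1 else none

lemma integral_pi_map {n : ℕ} {S T : Type*} [Countable S] [Countable T] [MeasurableSpace S]
    [MeasurableSpace T] [DiscreteMeasurableSpace S] [DiscreteMeasurableSpace T]
    (μ : Measure S) [IsProbabilityMeasure μ] (φ : S → T) (F : (Fin n → T) → ℝ) :
    ∫ v, F v ∂(Measure.pi fun _ => μ.map φ) = ∫ u, F (fun i => φ (u i)) ∂(Measure.pi fun _ => μ) := by
  haveI : IsProbabilityMeasure (μ.map φ) :=
    Measure.isProbabilityMeasure_map Measurable.of_discrete.aemeasurable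
  rw [← Measure.pi_map_pi (fun _ => Measurable.of_discrete.aemeasurable), integral_map
    Measurable.of_discrete.aemeasurable Measurable.of_discrete.aestronglyMeasurable]

lemma thin_bound {G X : Type*} [Countable X] (V : Set G) {a : G → X → ℝ}
    (ha : ∀ g x, a g x ∈ Set.Icc (0 : ℝ) 1) {n : ℕ} (β : Measure Bool) [IsProbabilityMeasure β]
    (k : ℝ) (hk : 1 ≤ k) (hβ : β.real {true} = k⁻¹) (κ : Measure (Option X))
    [IsProbabilityMeasure κ] :
    ∫ v : Fin n → Option X, optF V a v ∂(Measure.pi fun _ => κ) ≤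
      k * ∫ v : Fin n → Option X, optF V a v ∂(Measure.pi fun _ => (κ.prod β).map thin) := by
  have hk0 : 0 < k := by linarith
  rw [integral_pi_map]
  have h1 : ∫ u : Fin n → Option X × Bool, optF V a (fun i => thin (u i))
      ∂(Measure.pi fun _ => κ.prod β) =
      ∫ p : (Fin n → Option X) × (Fin n → Bool), optF V a (fun i => thin (p.1 i, p.2 i))
        ∂((Measure.pi fun _ => κ).prod (Measure.pi fun _ => β)) := by
    rw [← (measurePreserving_arrowProdEquivProdArrow (Option X) Bool (Fin n)
      (fun _ => κ) (fun _ => β)).map_eq, integral_map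
    Measurable.of_discrete.aemeasurable Measurable.of_discrete.aestronglyMeasurable]
    rfl
  rw [h1, integral_prod _ (integrable_disc _ _ n (fun p => optF_nonneg V ha _)
    (fun p => optF_le V ha _)), ← integral_const_mul]
  have hpt : ∀ v : Fin n → Option X, optF V a v ≤
      k * ∫ b : Fin n → Bool, optF V a (fun i => thin (v i, b i)) ∂(Measure.pi fun _ => β) := by
    intro v
    refine bis_le (mul_nonneg hk0.le (integral_nonneg fun b => optF_nonneg V ha _)) ?_
    intro g hg
    rw [← div_le_iff₀' hk0]
    have h2 : ∫ b : Fin n → Bool, ∑ i, (thin (v i, b i)).elim 0 (a g) ∂(Measure.pi fun _ => β) =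
        (∑ i, (v i).elim 0 (a g)) / k := by
      rw [integral_finsetSum _ (fun i _ => integrable_disc _ _ 1
        (fun b => (elim_mem ha g _).1) (fun b => (elim_mem ha g _).2)), Finset.sum_div]
      refine Finset.sum_congr rfl fun i _ => ?_
      rw [integral_comp_eval (μ := fun _ : Fin n => β)
        (f := fun b => (thin (v i, b)).elim 0 (a g)) Measurable.of_discrete.aestronglyMeasurable,
        integral_fintype (integrable_disc _ _ 1
        (fun b => (elim_mem ha g _).1) (fun b => (elim_mem ha g _).2))]
      simp [thin, hβ]
      ring
    rw [← h2]
    refine integral_mono (integrable_disc _ _ n (fun b => Finset.sum_nonneg fun i _ =>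
      (elim_mem ha g _).1) (fun b => sum_le_n fun i => elim_mem ha g _))
      (integrable_disc _ _ n (fun p => optF_nonneg V ha _) (fun p => optF_le V ha _)) ?_
    intro b
    exact le_optF V ha _ hg
  refine integral_mono (integrable_disc _ _ n (fun p => optF_nonneg V ha _)
    (fun p => optF_le V ha _)) (integrable_disc _ _ (k * n)
    (fun v => (optF_nonneg V ha _).trans (hpt v)) fun v => ?_) hpt
  refine mul_le_mul_of_nonneg_left ?_ hk0.le
  refine (integral_mono (integrable_disc _ _ n (fun p => optF_nonneg V ha _)
    (fun p => optF_le V ha _)) (integrable_const (n : ℝ)) (fun b => optF_le V ha _)).trans ?_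
  simp

/-- Comparison of the two partially erased samples with the full `P`-sample. -/
lemma erased_bound {G X : Type*} [Countable X] [MeasurableSpace X] [DiscreteMeasurableSpace X]
    (V : Set G) {a : G → X → ℝ}
    (ha : ∀ g x, a g x ∈ Set.Icc (0 : ℝ) 1) {n : ℕ} (P : PMF X)
    (k : ℝ) (hk : 1 ≤ k) (κ : Measure (Option X)) [IsProbabilityMeasure κ]
    (hκ : ∀ x, κ {some x} ≤ ENNReal.ofReal k * P x) :
    ∫ v : Fin n → Option X, optF V a v ∂(Measure.pi fun _ => κ) ≤
      k * ∫ z : Fin n → X, (⨆ g ∈ V, ∑ i, a g (z i)) ∂(Measure.pi fun _ => P.toMeasure) := by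
  have hk0 : 0 < k := by linarith
  have hK0 : ENNReal.ofReal k ≠ 0 := by simpa using hk0
  let r : NNReal := (Real.toNNReal k)⁻¹
  have hr : r ≤ 1 := inv_le_one_of_one_le₀ (by simpa using hk)
  let β : Measure Bool := (PMF.bernoulli r hr).toMeasure
  have hβ0 : β {true} = (ENNReal.ofReal k)⁻¹ := by
    rw [PMF.toMeasure_apply_singleton _ _ MeasurableSet.of_discrete]
    simp only [PMF.bernoulli_apply, cond_true, r]
    rw [ENNReal.coe_inv (by simpa using hk0)]
    rfl
  have hβ : β.real {true} = k⁻¹ := by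
    rw [measureReal_def, hβ0, ENNReal.toReal_inv, ENNReal.toReal_ofReal hk0.le]
  refine (thin_bound V ha β k hk hβ κ).trans (mul_le_mul_of_nonneg_left ?_ hk0.le)
  haveI : IsProbabilityMeasure ((κ.prod β).map thin) :=
    Measure.isProbabilityMeasure_map Measurable.of_discrete.aemeasurable
  have hth : ∀ x, (κ.prod β).map thin {some x} = κ {some x} * (ENNReal.ofReal k)⁻¹ := by
    intro x
    rw [Measure.map_apply Measurable.of_discrete (MeasurableSet.of_discrete), ← hβ0,
      ← Measure.prod_prod]
    congr 1
    ext ⟨o, b⟩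
    cases b <;> simp [thin]
  obtain ⟨μ, hμ, hfst, hmark, -⟩ := exists_marked P
    (fun x => κ {some x} * (ENNReal.ofReal k)⁻¹) (fun x => by
      rw [← div_eq_mul_inv]
      exact ENNReal.div_le_of_le_mul' (hκ x))
  haveI : IsProbabilityMeasure (μ.map mark) :=
    Measure.isProbabilityMeasure_map Measurable.of_discrete.aemeasurable
  have he : (κ.prod β).map thin = μ.map mark := opt_ext _ _ fun x => by rw [hth, hmark]
  rw [he, ← hfst, integral_pi_map, integral_pi_map]
  have hle : ∀ z : Fin n → X, ∀ g ∈ V, ∑ i, a g (z i) ≤ n := fun z g _ =>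
    sum_le_n fun i => ha g _
  refine integral_mono (integrable_disc _ _ n (fun p => optF_nonneg V ha _)
    (fun p => optF_le V ha _)) (integrable_disc _ _ n
    (fun p => bis_nonneg fun g _ => Finset.sum_nonneg fun i _ => (ha g _).1)
    (fun p => bis_le n.cast_nonneg (hle _))) ?_
  intro u
  refine bis_le (bis_nonneg fun g _ => Finset.sum_nonneg fun i _ => (ha g _).1) fun g hg => ?_
  refine le_trans (Finset.sum_le_sum fun i _ => ?_)
    (le_bis n.cast_nonneg (hle fun i => (u i).1) hg)
  simp only [mark]
  split_ifs
  · exact le_rfl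
  · exact (ha g _).1

lemma selLoss_nonneg {X Y : Type*} {ℓ : Y → Y → ℝ} (hℓ : ∀ y y', ℓ y y' ∈ Set.Icc (0 : ℝ) 1)
    {c : ℝ} (hc : c ∈ Set.Ioc (0 : ℝ) 1) {n : ℕ} (x : Fin n → X) (g h : X → Y)
    (A : Finset (Fin n)) : 0 ≤ selLoss ℓ c x g h A := by
  have := hc.1
  have h2 : 0 ≤ ∑ i ∈ Aᶜ, ℓ (g (x i)) (h (x i)) := Finset.sum_nonneg fun i _ => (hℓ _ _).1
  unfold selLoss
  positivity

lemma selLoss_le {X Y : Type*} {ℓ : Y → Y → ℝ} (hℓ : ∀ y y', ℓ y y' ∈ Set.Icc (0 : ℝ) 1)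
    {c : ℝ} (hc : c ∈ Set.Ioc (0 : ℝ) 1) {n : ℕ} (hn : 0 < n) (x : Fin n → X) (g h : X → Y)
    (A : Finset (Fin n)) : selLoss ℓ c x g h A ≤ 1 := by
  have hn' : (0 : ℝ) < n := by exact_mod_cast hn
  have h2 : ∑ i ∈ Aᶜ, ℓ (g (x i)) (h (x i)) ≤ (Aᶜ.card : ℝ) := by
    have := Finset.sum_le_sum (s := Aᶜ) fun i _ => (hℓ (g (x i)) (h (x i))).2
    simpa using this
  have h3 : (A.card : ℝ) + (Aᶜ.card : ℝ) = n := by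
    exact_mod_cast (by simpa using Finset.card_add_card_compl A)
  have h4 : c * (A.card : ℝ) ≤ A.card := mul_le_of_le_one_left (by positivity) hc.2
  have : selLoss ℓ c x g h A =
      (c * (A.card : ℝ) + ∑ i ∈ Aᶜ, ℓ (g (x i)) (h (x i))) / n := by
    unfold selLoss; field_simp
  rw [this, div_le_one hn']
  linarith

lemma part_one {X Y : Type*} [Countable X] [MeasurableSpace X] [DiscreteMeasurableSpace X]
    (ℓ : Y → Y → ℝ) (hℓ : ∀ y y', ℓ y y' ∈ Set.Icc (0 : ℝ) 1)
    (c : ℝ) (hc : c ∈ Set.Ioc (0 : ℝ) 1) {n : ℕ} (hn : 0 < n)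
    (P Q : PMF X) (V : Set (X → Y)) (h : X → Y) (k : ℝ) (hk : 1 ≤ k) :
      (∫ x : Fin n → X, (⨅ A : Finset (Fin n), worstSelLoss ℓ c x V h A)
          ∂(Measure.pi fun _ => Q.toMeasure)) ≤
        c * Dk P Q k +
          k * ∫ z : Fin n → X, worstLoss ℓ z V h ∂(Measure.pi fun _ => P.toMeasure) := by
  have hk0 : 0 < k := by linarith
  have hn' : (0 : ℝ) < n := by exact_mod_cast hn
  let a : (X → Y) → X → ℝ := fun g x => ℓ (g x) (h x)
  have ha : ∀ g x, a g x ∈ Set.Icc (0 : ℝ) 1 := fun g x => hℓ _ _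
  obtain ⟨μ, hμ, hfst, hmark, hD⟩ := exists_marked Q
    (fun x => min (Q x) (ENNReal.ofReal k * P x)) (fun x => min_le_left _ _)
  haveI : IsProbabilityMeasure (μ.map mark) :=
    Measure.isProbabilityMeasure_map Measurable.of_discrete.aemeasurable
  have hD' : μ.real {u | u.2 = false} = Dk P Q k := by
    rw [measureReal_def, hD, ENNReal.tsum_toReal_eq]
    · unfold Dk
      refine tsum_congr fun x => ?_
      have hQ := Q.apply_ne_top x
      have hP := P.apply_ne_top x
      have hKP : ENNReal.ofReal k * P x ≠ ⊤ := ENNReal.mul_ne_top ENNReal.ofReal_ne_top hP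
      rw [ENNReal.toReal_sub_of_le (min_le_left _ _) hQ, ENNReal.toReal_min hQ hKP,
        ENNReal.toReal_mul, ENNReal.toReal_ofReal hk0.le]
      rcases le_total (Q x).toReal (k * (P x).toReal) with h1 | h1
      · rw [min_eq_left h1, max_eq_right (by linarith)]; ring
      · rw [min_eq_right h1, max_eq_left (by linarith)]
    · intro x
      exact (tsub_le_self.trans_lt (Q.apply_lt_top x)).ne
  have hE := erased_bound (n := n) V ha P k hk (μ.map mark) (fun x => by
    rw [hmark]; exact min_le_right _ _)
  have hW : ∀ z : Fin n → X, worstLoss ℓ z V h = (1 / (n : ℝ)) * ⨆ g ∈ V, ∑ i, a g (z i) := by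
    intro z
    unfold worstLoss
    rw [Real.mul_iSup_of_nonneg (by positivity)]
    congr 1
    ext g
    rw [Real.mul_iSup_of_nonneg (by positivity)]
  have hws0 : ∀ (x : Fin n → X) A, 0 ≤ worstSelLoss ℓ c x V h A := fun x A =>
    bis_nonneg fun g _ => selLoss_nonneg hℓ hc x g h A
  have hws1 : ∀ (x : Fin n → X) A, worstSelLoss ℓ c x V h A ≤ 1 := fun x A =>
    bis_le zero_le_one fun g _ => selLoss_le hℓ hc hn x g h A
  have hinf : ∀ (x : Fin n → X) A, (⨅ A : Finset (Fin n), worstSelLoss ℓ c x V h A) ≤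
      worstSelLoss ℓ c x V h A := fun x A => ciInf_le ⟨0, by rintro _ ⟨A, rfl⟩; exact hws0 x A⟩ A
  have hinf0 : ∀ (x : Fin n → X), 0 ≤ (⨅ A : Finset (Fin n), worstSelLoss ℓ c x V h A) :=
    fun x => le_ciInf (hws0 x)
  let ind : X × Bool → ℝ := Set.indicator {u | u.2 = false} 1
  have hind0 : ∀ u, 0 ≤ ind u := fun u => Set.indicator_nonneg (fun _ _ => zero_le_one) u
  have hind1 : ∀ u, ind u ≤ 1 := fun u => Set.indicator_le_self' (fun _ _ => zero_le_one) u
  have hpt : ∀ u : Fin n → X × Bool,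
      (⨅ A : Finset (Fin n), worstSelLoss ℓ c (fun i => (u i).1) V h A) ≤
      c / n * ∑ i, ind (u i) + 1 / n * optF V a (fun i => mark (u i)) := by
    intro u
    refine (hinf _ (Finset.univ.filter fun i => (u i).2 = false)).trans ?_
    have hc0 := hc.1
    have hF0 := optF_nonneg V ha (fun i => mark (u i))
    refine bis_le (add_nonneg (mul_nonneg (by positivity)
      (Finset.sum_nonneg fun i _ => hind0 _)) (by positivity)) fun g hg => ?_
    unfold selLoss
    refine add_le_add (le_of_eq ?_) (mul_le_mul_of_nonneg_left ?_ (by positivity))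
    · congr 1
      rw [Finset.card_filter]
      push_cast
      refine Finset.sum_congr rfl fun i _ => ?_
      simp [ind, Set.indicator]
    · refine le_trans (le_of_eq ?_) (le_optF V ha _ hg)
      rw [Finset.compl_filter, Finset.sum_filter]
      refine Finset.sum_congr rfl fun i _ => ?_
      cases hb : (u i).2 <;> simp [mark, hb, a]
  have hI1 : Integrable (fun u : Fin n → X × Bool => c / n * ∑ i, ind (u i))
      (Measure.pi fun _ => μ) :=
    (integrable_disc _ _ n (fun u => Finset.sum_nonneg fun i _ => hind0 _)
      (fun u => sum_le_n fun i => ⟨hind0 _, hind1 _⟩)).const_mul _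
  have hI2 : Integrable (fun u : Fin n → X × Bool => 1 / n * optF V a (fun i => mark (u i)))
      (Measure.pi fun _ => μ) :=
    (integrable_disc _ _ n (fun u => optF_nonneg V ha _) (fun u => optF_le V ha _)).const_mul _
  rw [← hfst, integral_pi_map]
  refine (integral_mono (integrable_disc _ _ 1 (fun u => hinf0 _)
    (fun u => (hinf _ ∅).trans (hws1 _ _))) (hI1.add hI2) hpt).trans ?_
  simp only [Pi.add_apply]
  rw [integral_add hI1 hI2, integral_const_mul, integral_const_mul]
  refine add_le_add (le_of_eq ?_) ?_
  · rw [integral_finsetSum _ (fun i _ => integrable_disc _ _ 1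
        (fun b => hind0 _) (fun b => hind1 _))]
    have : ∀ i : Fin n, ∫ u : Fin n → X × Bool, ind (u i) ∂(Measure.pi fun _ => μ)
        = Dk P Q k := by
      intro i
      rw [integral_comp_eval (μ := fun _ : Fin n => μ) (f := ind)
        Measurable.of_discrete.aestronglyMeasurable, ← hD']
      exact integral_indicator_one MeasurableSet.of_discrete
    simp only [this, Finset.sum_const, Finset.card_univ, Fintype.card_fin, nsmul_eq_mul]
    field_simp
  · simp_rw [hW]
    rw [integral_const_mul, ← integral_pi_map, mul_left_comm]
    exact mul_le_mul_of_nonneg_left hE (by positivity)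

theorem stmt_3 {X Y : Type*} [Countable X] [MeasurableSpace X] [DiscreteMeasurableSpace X]
    (ℓ : Y → Y → ℝ) (hℓ : ∀ y y', ℓ y y' ∈ Set.Icc (0 : ℝ) 1)
    (c : ℝ) (hc : c ∈ Set.Ioc (0 : ℝ) 1) {n : ℕ} (hn : 0 < n)
    (P Q : PMF X) (V : Set (X → Y)) (hV : V.Nonempty)
    (f : X → Y) (hf : f ∈ V) (h : X → Y)
    (Astar : (Fin n → X) → Finset (Fin n))
    (hAstar : ∀ (x : Fin n → X) (A : Finset (Fin n)),
      worstSelLoss ℓ c x V h (Astar x) ≤ worstSelLoss ℓ c x V h A) :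
    (∀ k : ℝ, 1 ≤ k →
      (∫ x : Fin n → X, (⨅ A : Finset (Fin n), worstSelLoss ℓ c x V h A)
          ∂(Measure.pi fun _ => Q.toMeasure)) ≤
        c * Dk P Q k +
          k * ∫ z : Fin n → X, worstLoss ℓ z V h ∂(Measure.pi fun _ => P.toMeasure)) ∧
    (∫ x : Fin n → X, selLoss ℓ c x f h (Astar x)
        ∂(Measure.pi fun _ => Q.toMeasure)) ≤
      ⨅ k : {k : ℝ // 1 ≤ k},
        (c * Dk P Q (k : ℝ) +
          (k : ℝ) * ∫ z : Fin n → X, worstLoss ℓ z V h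
            ∂(Measure.pi fun _ => P.toMeasure)) := by
  have h1 := part_one ℓ hℓ c hc hn P Q V h
  refine ⟨h1, ?_⟩
  haveI : Nonempty {k : ℝ // 1 ≤ k} := ⟨⟨1, le_rfl⟩⟩
  refine le_ciInf fun k => le_trans ?_ (h1 k k.2)
  have hle : ∀ (x : Fin n → X) A, selLoss ℓ c x f h A ≤ worstSelLoss ℓ c x V h A := fun x A =>
    le_bis (φ := fun g => selLoss ℓ c x g h A) zero_le_one
      (fun g _ => selLoss_le hℓ hc hn x g h A) hf
  have hpt : ∀ x : Fin n → X, selLoss ℓ c x f h (Astar x) ≤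
      ⨅ A : Finset (Fin n), worstSelLoss ℓ c x V h A := fun x =>
    le_ciInf fun A => (hle x _).trans (hAstar x A)
  have h0 : ∀ (x : Fin n → X), 0 ≤ selLoss ℓ c x f h (Astar x) := fun x =>
    selLoss_nonneg hℓ hc x f h _
  refine integral_mono (integrable_disc _ _ 1 h0 fun x => selLoss_le hℓ hc hn x f h _)
    (integrable_disc _ _ 1 (fun x => (h0 x).trans (hpt x)) fun x => ?_) hpt
  refine (ciInf_le ⟨0, ?_⟩ ∅).trans
    (bis_le zero_le_one fun g _ => selLoss_le hℓ hc hn x g h ∅)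
  rintro _ ⟨A, rfl⟩
  exact bis_nonneg fun g _ => selLoss_nonneg hℓ hc x g h A
end

section
/- Let F be a class of functions X → {0,1} of VC dimension d, let f ∈ F, let P be a probability distribution on X, and let δ ∈ (0,1]. Then with probability at least 1 − δ over independent samples x̄, z ~ P^n: L_z(VS(x̄, f(x̄)), f) < (d·log₂(2n) + log₂(1/δ)) / n, where the loss is the 0-1 loss ℓ(y,ŷ) = |y − ŷ|. -/
open Finset MeasureTheory

/-- A class `F` of binary classifiers shatters a finite set `S`. -/
def Shatters {X : Type*} (F : Set (X → Bool)) (S : Finset X) : Prop :=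
  ∀ b : X → Bool, ∃ g ∈ F, ∀ a ∈ S, g a = b a

/-- The 0-1 loss. -/
noncomputable def loss01 : Bool → Bool → ℝ := fun y y' => if y = y' then 0 else 1

/-- Version space: classifiers in `F` consistent with the labeled data. -/
def VS {X : Type*} (F : Set (X → Bool)) {n : ℕ} (xb : Fin n → X) (yb : Fin n → Bool) :
    Set (X → Bool) :=
  {g ∈ F | ∀ i, g (xb i) = yb i}

/-- `L_z(V,h) = sup_{g ∈ V} (1/n)·Σ_i ℓ(g(z_i), h(z_i))` with the 0-1 loss. -/
noncomputable def worstLoss01 {X : Type*} {n : ℕ}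
    (z : Fin n → X) (V : Set (X → Bool)) (h : X → Bool) : ℝ :=
  ⨆ g ∈ V, (1 / (n : ℝ)) * ∑ i, loss01 (g (z i)) (h (z i))

section helpers

variable {X : Type*}

lemma sum_choose_aux (m d : ℕ) (hm : 2 ≤ m) :
    ∑ k ∈ Finset.Iic d, m.choose k ≤ m ^ d + 1 := by
  have hI : ∀ e : ℕ, Finset.Iic e = Finset.range (e + 1) := by
    intro e; ext x; simp
  rw [hI]
  induction d with
  | zero => simp
  | succ d ih =>
    rw [Finset.sum_range_succ]
    rcases Nat.eq_zero_or_pos d with h0 | hd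
    · subst h0; simp [add_comm]
    · have h1 : 2 * m.choose (d + 1) ≤ m ^ (d + 1) := by
        have h2 := Nat.choose_le_pow_div (α := ℝ) (d + 1) m
        have h3 : (2 : ℝ) ≤ ((d + 1).factorial : ℝ) := by
          have : d + 1 ≤ (d + 1).factorial := Nat.self_le_factorial _
          exact_mod_cast (by omega : 2 ≤ (d + 1).factorial)
        have h4 : (2 : ℝ) * m.choose (d + 1) ≤ (m : ℝ) ^ (d + 1) := by
          rw [le_div_iff₀ (by linarith)] at h2
          nlinarith [(Nat.cast_nonneg (m.choose (d + 1)) : (0 : ℝ) ≤ _)]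
        exact_mod_cast h4
      have h5 : 2 * m ^ d ≤ m ^ (d + 1) := by
        rw [pow_succ, mul_comm]; exact Nat.mul_le_mul_left _ hm
      omega

open Classical in
/-- disagreement patterns -/
noncomputable def pats (F : Set (X → Bool)) (f : X → Bool) {ι : Type} [Fintype ι]
    (q : ι → X) : Finset (Finset ι) :=
  Finset.univ.filter fun A => ∃ g ∈ F, A = Finset.univ.filter fun a => g (q a) ≠ f (q a)

open Classical in
lemma card_pats (F : Set (X → Bool)) (d : ℕ)
    (hVC : ∀ S : Finset X, _root_.Shatters F S → S.card ≤ d)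
    (f : X → Bool) {ι : Type} [Fintype ι] (q : ι → X) (hm : 2 ≤ Fintype.card ι) :
    (pats F f q).card ≤ (Fintype.card ι) ^ d + 1 := by
  refine (Finset.card_le_card_shatterer _).trans
    (Finset.card_shatterer_le_sum_vcDim.trans (le_trans ?_ (sum_choose_aux _ d hm)))
  refine Finset.sum_le_sum_of_subset (Finset.Iic_subset_Iic.2 ?_)
  refine Finset.sup_le fun S hS => ?_
  rw [Finset.mem_shatterer] at hS
  have key : ∀ t ⊆ S, ∃ g ∈ F, ∀ a ∈ S, (g (q a) ≠ f (q a) ↔ a ∈ t) := by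
    intro t ht
    obtain ⟨u, hu, hut⟩ := hS ht
    simp only [pats, Finset.mem_filter, Finset.mem_univ, true_and] at hu
    obtain ⟨g, hg, rfl⟩ := hu
    refine ⟨g, hg, fun a ha => ?_⟩
    rw [← hut]; simp [ha]
  have hinj : Set.InjOn q S := by
    intro a ha b hb hab
    by_contra hne
    obtain ⟨g, -, hg⟩ := key {a} (by simpa using ha)
    have h1 := hg a ha
    have h2 := hg b hb
    rw [← hab] at h2
    have h3 : b ∈ ({a} : Finset ι) := h2.1 (h1.2 (by simp))
    exact hne (Finset.mem_singleton.1 h3).symm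
  rw [← Finset.card_image_of_injOn hinj]
  apply hVC
  intro b
  obtain ⟨g, hg, h⟩ := key (S.filter fun a => b (q a) ≠ f (q a)) (Finset.filter_subset _ _)
  refine ⟨g, hg, ?_⟩
  intro y hy
  obtain ⟨a, ha, rfl⟩ := Finset.mem_image.1 hy
  have := h a ha
  simp only [Finset.mem_filter, ha, true_and] at this
  revert this
  cases g (q a) <;> cases b (q a) <;> cases f (q a) <;> simp

/-- coordinate swap -/
def swp {n : ℕ} (σ : Fin n → Bool) (p : (Fin n → X) × (Fin n → X)) :
    (Fin n → X) × (Fin n → X) :=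
  (fun i => if σ i then p.2 i else p.1 i, fun i => if σ i then p.1 i else p.2 i)

lemma swp_swp {n : ℕ} (σ : Fin n → Bool) (p : (Fin n → X) × (Fin n → X)) :
    swp σ (swp σ p) = p := by
  ext i <;> simp only [swp] <;> split_ifs <;> rfl

/-- the bad event -/
def Bad (F : Set (X → Bool)) (f : X → Bool) {n : ℕ} (k : ℕ)
    (p : (Fin n → X) × (Fin n → X)) : Prop :=
  ∃ g ∈ F, (∀ i, g (p.1 i) = f (p.1 i)) ∧
    k ≤ (Finset.univ.filter fun i => g (p.2 i) ≠ f (p.2 i)).card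

open Classical in
lemma fix_count {n : ℕ} (I : Finset (Fin n)) (c : Fin n → Bool) :
    (Finset.univ.filter fun σ : Fin n → Bool => ∀ i ∈ I, σ i = c i).card * 2 ^ I.card
      ≤ 2 ^ n := by
  have h : (Finset.univ.filter fun σ : Fin n → Bool => ∀ i ∈ I, σ i = c i) =
      Fintype.piFinset fun i => if i ∈ I then {c i} else Finset.univ := by
    ext σ
    simp only [Finset.mem_filter, Finset.mem_univ, true_and, Fintype.mem_piFinset]
    refine forall_congr' fun i => ?_
    by_cases hi : i ∈ I <;> simp [hi]
  rw [h, Fintype.card_piFinset]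
  have h2 : (2 : ℕ) ^ I.card = ∏ i : Fin n, if i ∈ I then 2 else 1 := by
    rw [Finset.prod_ite_mem]; simp
  rw [h2, ← Finset.prod_mul_distrib]
  have h3 : (2 : ℕ) ^ n = ∏ i : Fin n, 2 := by simp
  rw [h3]
  apply Finset.prod_le_prod'
  intro i _
  by_cases hi : i ∈ I <;> simp [hi]

open Classical in
lemma swap_count (F : Set (X → Bool)) (d : ℕ)
    (hVC : ∀ S : Finset X, _root_.Shatters F S → S.card ≤ d)
    (f : X → Bool) (hf : f ∈ F) {n : ℕ} (hn : 0 < n) (k : ℕ) (hk : 0 < k)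
    (p : (Fin n → X) × (Fin n → X)) :
    (Finset.univ.filter fun σ : Fin n → Bool => Bad F f k (swp σ p)).card * 2 ^ k
      ≤ (2 * n) ^ d * 2 ^ n := by
  set q : Fin n ⊕ Fin n → X := Sum.elim p.1 p.2 with hq
  have hcard := card_pats F d hVC f q (by simp; omega)
  have hcι : Fintype.card (Fin n ⊕ Fin n) = 2 * n := by simp; omega
  rw [hcι] at hcard
  let I : Finset (Fin n ⊕ Fin n) → Finset (Fin n) := fun A =>
    Finset.univ.filter fun i => Sum.inl i ∈ A ∨ Sum.inr i ∈ A
  let B : Finset (Fin n ⊕ Fin n) → Finset (Fin n → Bool) := fun A =>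
    Finset.univ.filter fun σ => ∀ i ∈ I A, σ i = decide (Sum.inl i ∈ A)
  let 𝒜 := ((pats F f q).erase ∅).filter fun A => k ≤ (I A).card
  have h𝒜 : 𝒜.card ≤ (2 * n) ^ d := by
    have h0 : ∅ ∈ pats F f q := by
      simp only [pats, Finset.mem_filter, Finset.mem_univ, true_and]
      exact ⟨f, hf, by simp⟩
    have h1 := Finset.card_erase_of_mem h0
    have h2 : 𝒜.card ≤ _ := Finset.card_filter_le _ _
    omega
  have hsub : (Finset.univ.filter fun σ : Fin n → Bool => Bad F f k (swp σ p)) ⊆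
      𝒜.biUnion B := by
    intro σ hσ
    simp only [Finset.mem_filter, Finset.mem_univ, true_and] at hσ
    obtain ⟨g, hg, h1, h2⟩ := hσ
    let A : Finset (Fin n ⊕ Fin n) := Finset.univ.filter fun a => g (q a) ≠ f (q a)
    have hl : ∀ i, Sum.inl i ∈ A ↔ g (p.1 i) ≠ f (p.1 i) := by intro i; simp [A, hq]
    have hr : ∀ i, Sum.inr i ∈ A ↔ g (p.2 i) ≠ f (p.2 i) := by intro i; simp [A, hq]
    have hIk : k ≤ (I A).card := by
      refine h2.trans (Finset.card_le_card ?_)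
      intro i hi
      replace hi := (Finset.mem_filter.1 hi).2
      simp only [swp] at hi
      simp only [I, Finset.mem_filter, Finset.mem_univ, true_and, hl, hr]
      split_ifs at hi
      · exact Or.inl hi
      · exact Or.inr hi
    refine Finset.mem_biUnion.2 ⟨A, ?_, ?_⟩
    · simp only [𝒜, Finset.mem_filter, Finset.mem_erase]
      refine ⟨⟨?_, ?_⟩, hIk⟩
      · intro hA
        rw [hA] at hIk
        simp [I] at hIk
        omega
      · simp only [pats, Finset.mem_filter, Finset.mem_univ, true_and]
        exact ⟨g, hg, rfl⟩
    · simp only [B, I, Finset.mem_filter, Finset.mem_univ, true_and]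
      intro i hi
      have h3 := h1 i
      simp only [swp] at h3
      cases hs : σ i
      · rw [hs] at h3
        symm
        rw [decide_eq_false_iff_not, hl]
        simpa using h3
      · rw [hs] at h3
        symm
        rw [decide_eq_true_iff]
        rcases hi with hi | hi
        · exact hi
        · exact absurd (by simpa using h3) ((hr i).1 hi)
  calc _ ≤ (∑ A ∈ 𝒜, (B A).card) * 2 ^ k :=
        Nat.mul_le_mul_right _ ((Finset.card_le_card hsub).trans Finset.card_biUnion_le)
    _ = ∑ A ∈ 𝒜, (B A).card * 2 ^ k := Finset.sum_mul _ _ _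
    _ ≤ ∑ A ∈ 𝒜, 2 ^ n := by
        refine Finset.sum_le_sum fun A hA => ?_
        refine le_trans (Nat.mul_le_mul_left _ ?_) (fix_count (I A) _)
        exact Nat.pow_le_pow_right (by norm_num) (Finset.mem_filter.1 hA).2
    _ = 𝒜.card * 2 ^ n := by simp
    _ ≤ _ := Nat.mul_le_mul_right _ h𝒜

variable [Countable X] [MeasurableSpace X] [DiscreteMeasurableSpace X]

lemma swp_measure (P : PMF X) {n : ℕ} (σ : Fin n → Bool) (s : Set ((Fin n → X) × (Fin n → X))) :
    ((Measure.pi fun _ : Fin n => P.toMeasure).prod (Measure.pi fun _ : Fin n => P.toMeasure))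
      (swp σ ⁻¹' s) =
    ((Measure.pi fun _ : Fin n => P.toMeasure).prod (Measure.pi fun _ : Fin n => P.toMeasure)) s := by
  set μ := (Measure.pi fun _ : Fin n => P.toMeasure).prod
    (Measure.pi fun _ : Fin n => P.toMeasure) with hμ
  have hsing : ∀ p : (Fin n → X) × (Fin n → X),
      μ {p} = ∏ i, (P.toMeasure {p.1 i} * P.toMeasure {p.2 i}) := by
    rintro ⟨x, z⟩
    rw [← Set.singleton_prod_singleton, hμ, Measure.prod_prod, Measure.pi_singleton,
      Measure.pi_singleton, Finset.prod_mul_distrib]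
  have hmeas : Measurable (swp (X := X) σ) := measurable_of_countable _
  have : Measure.map (swp σ) μ = μ := by
    refine Measure.ext_of_singleton fun p => ?_
    rw [Measure.map_apply hmeas (measurableSet_singleton p)]
    have : swp σ ⁻¹' {p} = {swp σ p} := by
      ext r
      simp only [Set.mem_preimage, Set.mem_singleton_iff]
      constructor
      · rintro rfl; rw [swp_swp]
      · rintro rfl; rw [swp_swp]
    rw [this, hsing, hsing]
    refine Finset.prod_congr rfl fun i _ => ?_
    simp only [swp]
    split_ifs
    · rw [mul_comm]
    · rfl
  conv_rhs => rw [← this]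
  rw [Measure.map_apply hmeas (Set.to_countable s).measurableSet]

open Classical in
lemma bad_measure (F : Set (X → Bool)) (d : ℕ)
    (hVC : ∀ S : Finset X, _root_.Shatters F S → S.card ≤ d)
    (f : X → Bool) (hf : f ∈ F) (P : PMF X) {n : ℕ} (hn : 0 < n) (k : ℕ) (hk : 0 < k) :
    ((Measure.pi fun _ : Fin n => P.toMeasure).prod (Measure.pi fun _ : Fin n => P.toMeasure))
      {p | Bad F f k p} * 2 ^ k ≤ (2 * n : ENNReal) ^ d := by
  set μ := (Measure.pi fun _ : Fin n => P.toMeasure).prod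
    (Measure.pi fun _ : Fin n => P.toMeasure) with hμ
  have h1 : (2 : ENNReal) ^ n * μ {p | Bad F f k p} =
      ∫⁻ p, ((Finset.univ.filter fun σ : Fin n → Bool => Bad F f k (swp σ p)).card : ENNReal) ∂μ := by
    have h2 : ∀ p, ((Finset.univ.filter fun σ : Fin n → Bool => Bad F f k (swp σ p)).card : ENNReal)
        = ∑ σ : Fin n → Bool, (swp σ ⁻¹' {p | Bad F f k p}).indicator 1 p := by
      intro p
      rw [Finset.card_filter]
      push_cast
      refine Finset.sum_congr rfl fun σ _ => ?_
      simp [Set.indicator_apply]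
    simp_rw [h2]
    rw [lintegral_finsetSum _ (fun σ _ => measurable_of_countable _)]
    have h3 : ∀ σ : Fin n → Bool,
        ∫⁻ p, (swp σ ⁻¹' {p | Bad F f k p}).indicator 1 p ∂μ = μ {p | Bad F f k p} := by
      intro σ
      rw [lintegral_indicator_one (Set.to_countable _).measurableSet, hμ, swp_measure]
    simp_rw [h3]
    simp
  have h4 : (2 : ENNReal) ^ n * (μ {p | Bad F f k p} * 2 ^ k) ≤ 2 ^ n * (2 * n : ENNReal) ^ d := by
    rw [← mul_assoc, h1, ← lintegral_mul_const _ (measurable_of_countable _)]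
    calc _ ≤ ∫⁻ p, (2 : ENNReal) ^ n * (2 * n : ENNReal) ^ d ∂μ := by
          refine lintegral_mono fun p => ?_
          have := swap_count F d hVC f hf hn k hk p
          rw [mul_comm (2 ^ n : ENNReal)]
          have h5 := (Nat.cast_le (α := ENNReal)).2 this
          push_cast at h5
          exact h5
      _ = _ := by simp
  exact (ENNReal.mul_le_mul_iff_right (by simp) (by simp)).1 h4

end helpers

theorem stmt_4 {X : Type*} [Countable X] [MeasurableSpace X] [DiscreteMeasurableSpace X]
    (F : Set (X → Bool)) (d : ℕ)
    (hVC : ∀ S : Finset X, Shatters F S → S.card ≤ d)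
    (f : X → Bool) (hf : f ∈ F)
    (P : PMF X) {n : ℕ} (hn : 0 < n) (δ : ℝ) (hδ : δ ∈ Set.Ioc (0 : ℝ) 1) :
    ENNReal.ofReal (1 - δ) ≤
      ((Measure.pi fun _ : Fin n => P.toMeasure).prod
          (Measure.pi fun _ : Fin n => P.toMeasure))
        {p : (Fin n → X) × (Fin n → X) |
          worstLoss01 p.2 (VS F p.1 fun i => f (p.1 i)) f <
            ((d : ℝ) * Real.logb 2 (2 * n) + Real.logb 2 (1 / δ)) / n} := by
  rcases eq_or_lt_of_le hδ.2 with h1 | hδ1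
  · simp [h1]
  have hδ0 := hδ.1
  set K : ℝ := (d : ℝ) * Real.logb 2 (2 * n) + Real.logb 2 (1 / δ) with hK
  have hn1 : (1 : ℝ) ≤ n := by exact_mod_cast hn
  have hn0 : (0 : ℝ) < n := by linarith
  have hKpos : 0 < K := by
    have a1 : 0 ≤ Real.logb 2 (2 * n) := Real.logb_nonneg (by norm_num) (by linarith)
    have a2 : 0 < Real.logb 2 (1 / δ) :=
      Real.logb_pos (by norm_num) (by rw [lt_div_iff₀ hδ0]; linarith)
    positivity
  have hk : 0 < ⌈K⌉₊ := Nat.ceil_pos.2 hKpos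
  have hB := bad_measure F d hVC f hf P hn ⌈K⌉₊ hk
  set μ := (Measure.pi fun _ : Fin n => P.toMeasure).prod
    (Measure.pi fun _ : Fin n => P.toMeasure) with hμ
  have hpow : ((2 : ℝ) * n) ^ d ≤ δ * 2 ^ ⌈K⌉₊ := by
    have b1 : (2 : ℝ) ^ K = (2 * n) ^ d * (1 / δ) := by
      rw [hK, Real.rpow_add (by norm_num), mul_comm (d : ℝ), Real.rpow_mul (by norm_num),
        Real.rpow_logb (by norm_num) (by norm_num) (by positivity),
        Real.rpow_logb (by norm_num) (by norm_num) (by positivity), Real.rpow_natCast]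
    have b2 : (2 : ℝ) ^ K ≤ 2 ^ ⌈K⌉₊ := by
      rw [← Real.rpow_natCast]
      exact Real.rpow_le_rpow_of_exponent_le (by norm_num) (Nat.le_ceil K)
    have b3 : ((2 : ℝ) * n) ^ d = δ * 2 ^ K := by rw [b1]; field_simp
    rw [b3]
    exact mul_le_mul_of_nonneg_left b2 hδ0.le
  have hBδ : μ {p | Bad F f ⌈K⌉₊ p} ≤ ENNReal.ofReal δ := by
    have c1 : (2 * n : ENNReal) ^ d ≤ ENNReal.ofReal δ * 2 ^ ⌈K⌉₊ := by
      have := ENNReal.ofReal_le_ofReal hpow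
      rw [ENNReal.ofReal_mul hδ0.le, ENNReal.ofReal_pow (by positivity),
        ENNReal.ofReal_pow (by positivity), ENNReal.ofReal_mul (by norm_num)] at this
      simpa using this
    exact (ENNReal.mul_le_mul_iff_left (by simp) (by simp)).1 (hB.trans c1)
  have hsub : {p : (Fin n → X) × (Fin n → X) | Bad F f ⌈K⌉₊ p}ᶜ ⊆
      {p | worstLoss01 p.2 (VS F p.1 fun i => f (p.1 i)) f < K / n} := by
    intro p hp
    simp only [Set.mem_compl_iff, Set.mem_ofPred_eq, Bad, not_exists, not_and, not_le] at hp
    have e1 : ((⌈K⌉₊ - 1 : ℕ) : ℝ) < K := Nat.lt_ceil.1 (by omega)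
    have e2 : worstLoss01 p.2 (VS F p.1 fun i => f (p.1 i)) f ≤ ((⌈K⌉₊ - 1 : ℕ) : ℝ) / n := by
      refine Real.iSup_le (fun g => Real.iSup_le (fun hg => ?_) (by positivity)) (by positivity)
      have e3 := hp g hg.1 hg.2
      have e4 : ∑ i, loss01 (g (p.2 i)) (f (p.2 i)) =
          ((Finset.univ.filter fun i => g (p.2 i) ≠ f (p.2 i)).card : ℝ) := by
        rw [Finset.card_filter]
        push_cast
        refine Finset.sum_congr rfl fun i _ => ?_
        unfold loss01
        split_ifs <;> simp_all
      rw [e4, one_div, mul_comm, ← div_eq_mul_inv]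
      gcongr
      omega
    exact e2.trans_lt (by gcongr)
  refine le_trans ?_ (measure_mono hsub)
  rw [prob_compl_eq_one_sub (Set.to_countable _).measurableSet, ENNReal.ofReal_sub _ hδ0.le,
    ENNReal.ofReal_one]
  exact tsub_le_tsub_left hBδ 1
end

section
/- Let f, h : X → Y, let Q be a probability distribution on the countable set X, and let a : X^n → [0,1]^n be any transductive abstainer (a function assigning each test sequence a vector of abstention probabilities). Then E_{x ~ Q^n, i uniform in {1,…,n}}[ ℓ_Q(f, h, r_i) ] = E_{x ~ Q^n}[ ℓ_x(f, h, a(x)) ], where for each x ∈ X^n and i, the abstainer r_i : X → [0,1] is defined by r_i(x') := a_i(x_1, …, x_{i−1}, x', x_{i+1}, …, x_n) (the i-th coordinate of a evaluated on x with its i-th entry replaced by x'). -/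
open Finset MeasureTheory

/-- Selective test loss with fractional abstention vector `a`. -/
noncomputable def selLossFrac {X Y : Type*} (ℓ : Y → Y → ℝ) (c : ℝ) {n : ℕ}
    (x : Fin n → X) (f h : X → Y) (a : Fin n → ℝ) : ℝ :=
  (1 / (n : ℝ)) * ∑ i, (c * a i + (1 - a i) * ℓ (f (x i)) (h (x i)))

/-- Generalization loss of predictor `h` with abstainer `r` on distribution `Q`. -/
noncomputable def genLoss {X Y : Type*} [MeasurableSpace X] (ℓ : Y → Y → ℝ) (c : ℝ)
    (Q : PMF X) (f h : X → Y) (r : X → ℝ) : ℝ :=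
  ∫ t, (c * r t + (1 - r t) * ℓ (f t) (h t)) ∂Q.toMeasure

theorem map_update_pi {X : Type*} [MeasurableSpace X] {n : ℕ} (μ : Measure X)
    [IsProbabilityMeasure μ] (i : Fin n) :
    ((Measure.pi fun _ : Fin n => μ).prod μ).map
      (fun p : (Fin n → X) × X => Function.update p.1 i p.2) = Measure.pi fun _ => μ := by
  have hm : Measurable (fun p : (Fin n → X) × X => Function.update p.1 i p.2) := by
    rw [measurable_pi_iff]
    intro j
    by_cases hj : j = i
    · subst hj
      simpa using measurable_snd
    · simp only [Function.update_of_ne hj]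
      exact (measurable_pi_apply j).comp measurable_fst
  symm
  apply Measure.pi_eq
  intro s hs
  rw [Measure.map_apply hm (MeasurableSet.univ_pi hs)]
  have hpre : (fun p : (Fin n → X) × X => Function.update p.1 i p.2) ⁻¹' (Set.univ.pi s)
      = (Set.univ.pi (Function.update s i Set.univ)) ×ˢ (s i) := by
    ext ⟨x, t⟩
    simp only [Set.mem_preimage, Set.mem_pi, Set.mem_univ, true_imp_iff, Set.mem_prod]
    constructor
    · intro H
      refine ⟨fun j => ?_, by simpa using H i⟩
      by_cases hj : j = i
      · subst hj; simp
      · simpa [Function.update_of_ne hj] using H j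
    · rintro ⟨H, ht⟩ j
      by_cases hj : j = i
      · subst hj; simpa using ht
      · simpa [Function.update_of_ne hj] using H j
  rw [hpre, Measure.prod_prod, Measure.pi_pi, ← Finset.prod_erase_mul _ _ (Finset.mem_univ i),
    ← Finset.prod_erase_mul (a := i) Finset.univ (fun j => μ (s j)) (Finset.mem_univ i)]
  simp only [Function.update_self, measure_univ, mul_one]
  congr 1
  apply Finset.prod_congr rfl
  intro j hj
  rw [Function.update_of_ne (Finset.ne_of_mem_erase hj)]

theorem stmt_10 {X Y : Type*} [Countable X] [MeasurableSpace X] [DiscreteMeasurableSpace X]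
    (ℓ : Y → Y → ℝ) (hℓ : ∀ y y', ℓ y y' ∈ Set.Icc (0 : ℝ) 1)
    (c : ℝ) (hc : c ∈ Set.Ioc (0 : ℝ) 1) {n : ℕ} (hn : 0 < n)
    (f h : X → Y) (Q : PMF X)
    (a : (Fin n → X) → Fin n → ℝ)
    (ha01 : ∀ x i, a x i ∈ Set.Icc (0 : ℝ) 1) :
    (1 / (n : ℝ)) * ∑ i : Fin n,
        ∫ x : Fin n → X,
          genLoss ℓ c Q f h (fun x' => a (Function.update x i x') i)
          ∂(Measure.pi fun _ => Q.toMeasure) =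
      ∫ x : Fin n → X, selLossFrac ℓ c x f h (a x)
        ∂(Measure.pi fun _ => Q.toMeasure) := by
  have hprob : IsProbabilityMeasure Q.toMeasure := inferInstance
  set g : Fin n → (Fin n → X) → ℝ :=
    fun i x => c * a x i + (1 - a x i) * ℓ (f (x i)) (h (x i)) with hg
  have hgm : ∀ i, Measurable (g i) := fun i => Measurable.of_discrete
  have hgb : ∀ i x, ‖g i x‖ ≤ 2 := by
    intro i x
    obtain ⟨h1, h2⟩ := ha01 x i
    obtain ⟨h3, h4⟩ := hℓ (f (x i)) (h (x i))
    obtain ⟨h5, h6⟩ := hc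
    rw [Real.norm_eq_abs, abs_le]
    simp only [hg]
    constructor <;> nlinarith [mul_nonneg h5.le h1, mul_nonneg (sub_nonneg.2 h2) h3,
      mul_nonneg (sub_nonneg.2 h2) (sub_nonneg.2 h4), mul_nonneg h1 (sub_nonneg.2 h6)]
  have hgi : ∀ i, Integrable (g i) (Measure.pi fun _ => Q.toMeasure) := fun i =>
    Integrable.of_bound (hgm i).aestronglyMeasurable 2 (Filter.Eventually.of_forall (hgb i))
  simp only [selLossFrac]
  rw [integral_const_mul, integral_finsetSum _ (fun i _ => hgi i)]
  congr 1
  apply Finset.sum_congr rfl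
  intro i _
  have hmap := map_update_pi Q.toMeasure i
  have hm : Measurable (fun p : (Fin n → X) × X => Function.update p.1 i p.2) :=
    Measurable.of_discrete
  have key : ∫ x, g i x ∂(Measure.pi fun _ => Q.toMeasure) =
      ∫ x, ∫ t, g i (Function.update x i t) ∂Q.toMeasure
        ∂(Measure.pi fun _ => Q.toMeasure) := by
    conv_lhs => rw [← hmap]
    rw [integral_map hm.aemeasurable (hgm i).aestronglyMeasurable, integral_prod]
    exact Integrable.of_bound ((hgm i).comp hm).aestronglyMeasurable 2
      (Filter.Eventually.of_forall fun p => hgb i _)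
  refine Eq.trans ?_ key.symm
  simp [genLoss, hg]
end

section
/- Let X = {1, 2}, let F be the set of all four functions from {1,2} to {0,1}, let P be the point mass at 1, let Q be uniform on {1,2} (so |P−Q|_TV = 1/2), and let μ be the uniform distribution over F. There exists a constant κ > 0 such that for every c ∈ (0, 1/2), every n ≥ 4, and every (possibly randomized) transductive selective classification algorithm L mapping (x̄, f(x̄), x) to a pair (h, a) with h : X → {0,1} and a ∈ [0,1]^n: Pr_{f ~ μ, x̄ ~ P^n, x ~ Q^n}[ ℓ_x(f, h, a) ≥ c·|P−Q|_TV + c/√n ] ≥ κ. -/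
open Finset MeasureTheory

/-- Selective test loss with fractional abstention vector `a` (0-1 base loss). -/
noncomputable def selLossFrac01 {X : Type*} (c : ℝ) {n : ℕ}
    (x : Fin n → X) (f h : X → Bool) (a : Fin n → ℝ) : ℝ :=
  (1 / (n : ℝ)) * ∑ i, (c * a i + (1 - a i) * loss01 (f (x i)) (h (x i)))

/-- signs -/
noncomputable def sgn2 : Fin 2 → ℝ := ![-1, 1]

/-- signed sum -/
noncomputable def signSum {n : ℕ} (x : Fin n → Fin 2) : ℝ := ∑ i, sgn2 (x i)

lemma one_add_sq_le_cosh (t : ℝ) (ht : 0 ≤ t) : 1 + t ^ 2 / 2 ≤ Real.cosh t := by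
  have h1 : Real.cosh t = 1 + 2 * Real.sinh (t / 2) ^ 2 := by
    have := Real.cosh_two_mul (t / 2)
    rw [show 2 * (t / 2) = t by ring] at this
    rw [this, Real.cosh_sq]; ring
  have h2 : t / 2 ≤ Real.sinh (t / 2) := Real.self_le_sinh_iff.2 (by linarith)
  rw [h1]
  nlinarith

lemma sum_exp_signSum (n : ℕ) (t : ℝ) :
    ∑ x : Fin n → Fin 2, Real.exp (t * signSum x) = 2 ^ n * Real.cosh t ^ n := by
  have h := Fintype.sum_pow (fun a : Fin 2 => Real.exp (t * sgn2 a)) n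
  have h2 : ∑ a : Fin 2, Real.exp (t * sgn2 a) = 2 * Real.cosh t := by
    simp [Fin.sum_univ_two, sgn2, Real.cosh_eq]; ring
  rw [h2, mul_pow] at h
  rw [h]
  refine Finset.sum_congr rfl fun x _ => ?_
  rw [← Real.exp_sum, signSum, Finset.mul_sum]

lemma cosh_pow_lower (n : ℕ) (hn : 50 ≤ n) :
    2 * Real.exp 12 ≤ Real.cosh (6 / Real.sqrt n) ^ n := by
  have hn' : (50 : ℝ) ≤ n := by exact_mod_cast hn
  have hpos : (0 : ℝ) < n := by linarith
  have h1 := one_add_sq_le_cosh (6 / Real.sqrt n) (by positivity)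
  have h2 : (6 / Real.sqrt n) ^ 2 / 2 = 18 / n := by
    rw [div_pow, Real.sq_sqrt hpos.le]; ring
  rw [h2] at h1
  have h3 : Real.exp (13 / n) ≤ 1 + 18 / (n : ℝ) := by
    rw [← Real.le_log_iff_exp_le (by positivity)]
    refine le_trans ?_ (Real.one_sub_inv_le_log_of_pos (by positivity))
    rw [show 1 - (1 + 18 / (n : ℝ))⁻¹ = 18 / (n + 18) by field_simp; ring]
    rw [div_le_div_iff₀ hpos (by positivity)]
    linarith
  have h4 : Real.exp 13 ≤ Real.cosh (6 / Real.sqrt n) ^ n := by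
    calc Real.exp 13 = Real.exp (13 / n) ^ n := by
          rw [← Real.exp_nat_mul]; congr 1; field_simp
      _ ≤ _ := pow_le_pow_left₀ (Real.exp_pos _).le (h3.trans h1) n
  refine le_trans ?_ h4
  rw [show (13 : ℝ) = 1 + 12 by norm_num, Real.exp_add]
  have : (2 : ℝ) ≤ Real.exp 1 := by have := Real.add_one_le_exp (1 : ℝ); linarith
  exact mul_le_mul_of_nonneg_right this (Real.exp_pos _).le

open Classical in
/-- good test samples -/
noncomputable def goodSet (n : ℕ) : Finset (Fin n → Fin 2) :=
  Finset.univ.filter fun x => 2 * Real.sqrt n ≤ signSum x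

lemma good_card_large (n : ℕ) (hn : 50 ≤ n) :
    Real.exp (-50) * 2 ^ n ≤ ((goodSet n).card : ℝ) := by
  classical
  have hn' : (50 : ℝ) ≤ n := by exact_mod_cast hn
  have hpos : (0 : ℝ) < n := by linarith
  have hs : 0 < Real.sqrt n := Real.sqrt_pos.2 hpos
  set t := 6 / Real.sqrt n with ht
  have htpos : 0 < t := by positivity
  have hM := cosh_pow_lower n hn
  have hZ := sum_exp_signSum n t
  have hZ2 := sum_exp_signSum n (2 * t)
  have hsplit := Finset.sum_filter_add_sum_filter_not Finset.univ
    (fun x : Fin n → Fin 2 => 2 * Real.sqrt n ≤ signSum x) (fun x => Real.exp (t * signSum x))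
  have hbad : ∑ x ∈ Finset.univ.filter (fun x : Fin n → Fin 2 => ¬ 2 * Real.sqrt n ≤ signSum x),
      Real.exp (t * signSum x) ≤ 2 ^ n * Real.exp 12 := by
    calc _ ≤ ∑ x ∈ Finset.univ.filter
          (fun x : Fin n → Fin 2 => ¬ 2 * Real.sqrt n ≤ signSum x), Real.exp 12 := by
            refine Finset.sum_le_sum fun x hx => ?_
            rw [Finset.mem_filter] at hx
            apply Real.exp_le_exp.2
            have h1 : signSum x ≤ 2 * Real.sqrt n := (not_le.1 hx.2).le
            calc t * signSum x ≤ t * (2 * Real.sqrt n) := mul_le_mul_of_nonneg_left h1 htpos.le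
              _ = 12 := by rw [ht]; field_simp; norm_num
      _ ≤ ∑ x : Fin n → Fin 2, Real.exp 12 :=
            Finset.sum_le_sum_of_subset_of_nonneg (Finset.filter_subset _ _)
              fun _ _ _ => (Real.exp_pos _).le
      _ = _ := by simp
  have hgood : 2 ^ n * Real.exp 12 ≤ ∑ x ∈ goodSet n, Real.exp (t * signSum x) := by
    have : goodSet n = Finset.univ.filter
      (fun x : Fin n → Fin 2 => 2 * Real.sqrt n ≤ signSum x) := by
      ext x; simp [goodSet]
    rw [this]
    have h2n : (0 : ℝ) < 2 ^ n := by positivity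
    have := mul_le_mul_of_nonneg_left hM h2n.le
    linarith
  have hcs := sq_sum_le_card_mul_sum_sq (s := goodSet n)
    (f := fun x => Real.exp (t * signSum x))
  have hsq : ∑ x ∈ goodSet n, Real.exp (t * signSum x) ^ 2 ≤ 2 ^ n * Real.exp 72 := by
    calc _ ≤ ∑ x : Fin n → Fin 2, Real.exp (t * signSum x) ^ 2 :=
            Finset.sum_le_sum_of_subset_of_nonneg (Finset.subset_univ _)
              fun _ _ _ => by positivity
      _ = ∑ x : Fin n → Fin 2, Real.exp (2 * t * signSum x) := by
            refine Finset.sum_congr rfl fun x _ => ?_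
            rw [← Real.exp_nat_mul]; congr 1; push_cast; ring
      _ = 2 ^ n * Real.cosh (2 * t) ^ n := hZ2
      _ ≤ 2 ^ n * Real.exp 72 := by
            apply mul_le_mul_of_nonneg_left _ (by positivity)
            calc Real.cosh (2 * t) ^ n ≤ Real.exp ((2 * t) ^ 2 / 2) ^ n :=
                  pow_le_pow_left₀ (Real.cosh_pos _).le (Real.cosh_le_exp_half_sq _) n
              _ = Real.exp 72 := by
                  rw [← Real.exp_nat_mul]; congr 1
                  rw [ht, mul_pow, div_pow, Real.sq_sqrt hpos.le]; field_simp; norm_num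
  have h1 : (2 ^ n * Real.exp 12) ^ 2 ≤ (goodSet n).card * (2 ^ n * Real.exp 72) :=
    calc _ ≤ (∑ x ∈ goodSet n, Real.exp (t * signSum x)) ^ 2 :=
          pow_le_pow_left₀ (by positivity) hgood 2
      _ ≤ _ := hcs
      _ ≤ _ := mul_le_mul_of_nonneg_left hsq (by positivity)
  have h2 : (2 ^ n * Real.exp 12) ^ 2 = (Real.exp (-48) * 2 ^ n) * (2 ^ n * Real.exp 72) := by
    have : Real.exp (-48) * Real.exp 72 = Real.exp 12 ^ 2 := by
      rw [← Real.exp_add, ← Real.exp_nat_mul]; norm_num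
    rw [mul_pow, ← this]; ring
  rw [h2] at h1
  have h3 := le_of_mul_le_mul_right h1 (by positivity)
  refine le_trans ?_ h3
  apply mul_le_mul_of_nonneg_right _ (by positivity)
  exact Real.exp_le_exp.2 (by norm_num)

lemma good_card (n : ℕ) (hn : 4 ≤ n) :
    Real.exp (-50) * 2 ^ n ≤ ((goodSet n).card : ℝ) := by
  classical
  rcases le_or_gt 50 n with h | h
  · exact good_card_large n h
  · have hmem : (fun _ => 1 : Fin n → Fin 2) ∈ goodSet n := by
      have hS : signSum (fun _ => 1 : Fin n → Fin 2) = n := by simp [signSum, sgn2]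
      refine Finset.mem_filter.2 ⟨Finset.mem_univ _, ?_⟩
      rw [hS]
      have h4 : (4 : ℝ) ≤ n := by exact_mod_cast hn
      have h5 : 2 ≤ Real.sqrt n := Real.le_sqrt_of_sq_le (by linarith)
      nlinarith [Real.mul_self_sqrt (show (0 : ℝ) ≤ n by linarith)]
    have hc : (1 : ℝ) ≤ (goodSet n).card := by
      exact_mod_cast Finset.card_pos.2 ⟨_, hmem⟩
    refine le_trans ?_ hc
    have h2 : (2 : ℝ) ^ n ≤ Real.exp 50 :=
      calc (2 : ℝ) ^ n ≤ 2 ^ 50 := pow_le_pow_right₀ (by norm_num) h.le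
        _ ≤ Real.exp 1 ^ 50 := by
            apply pow_le_pow_left₀ (by norm_num)
            have := Real.add_one_le_exp (1 : ℝ); linarith
        _ = Real.exp 50 := by rw [← Real.exp_nat_mul]; norm_num
    calc Real.exp (-50) * 2 ^ n ≤ Real.exp (-50) * Real.exp 50 :=
          mul_le_mul_of_nonneg_left h2 (Real.exp_pos _).le
      _ = 1 := by rw [← Real.exp_add]; norm_num

lemma good_measure (n : ℕ) (hn : 4 ≤ n) :
    ENNReal.ofReal (Real.exp (-50)) ≤
      (Measure.pi fun _ : Fin n => (PMF.uniformOfFintype (Fin 2)).toMeasure)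
        (goodSet n : Set (Fin n → Fin 2)) := by
  rw [← sum_measure_singleton]
  have h : ∀ x : Fin n → Fin 2,
      (Measure.pi fun _ : Fin n => (PMF.uniformOfFintype (Fin 2)).toMeasure) {x}
        = ENNReal.ofReal ((2 ^ n)⁻¹) := by
    intro x
    rw [Measure.pi_singleton]
    simp only [PMF.toMeasure_apply_singleton _ _ (measurableSet_singleton _),
      PMF.uniformOfFintype_apply, Fintype.card_fin, Finset.prod_const, Finset.card_univ]
    rw [ENNReal.ofReal_inv_of_pos (by positivity), ENNReal.ofReal_pow (by norm_num),
      ENNReal.inv_pow]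
    norm_num
  simp only [h, Finset.sum_const, nsmul_eq_mul]
  rw [← ENNReal.ofReal_natCast, ← ENNReal.ofReal_mul (by positivity)]
  apply ENNReal.ofReal_le_ofReal
  rw [← div_eq_mul_inv, le_div_iff₀ (by positivity)]
  exact good_card n hn

/-- flip the label of the second point -/
def flipSnd (f : Fin 2 → Bool) : Fin 2 → Bool := ![f 0, !(f 1)]

lemma flipSnd_flipSnd (f : Fin 2 → Bool) : flipSnd (flipSnd f) = f := by
  ext i; fin_cases i <;> simp [flipSnd]

/-- flip as a measurable equivalence -/
def flipEquiv : (Fin 2 → Bool) ≃ᵐ (Fin 2 → Bool) where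
  toFun := flipSnd
  invFun := flipSnd
  left_inv := flipSnd_flipSnd
  right_inv := flipSnd_flipSnd
  measurable_toFun := Measurable.of_discrete
  measurable_invFun := Measurable.of_discrete

lemma flip_mp : MeasurePreserving flipEquiv
    (PMF.uniformOfFintype (Fin 2 → Bool)).toMeasure
    (PMF.uniformOfFintype (Fin 2 → Bool)).toMeasure := by
  refine ⟨flipEquiv.measurable, ?_⟩
  refine Measure.ext_of_singleton fun a => ?_
  rw [MeasurableEquiv.map_apply]
  have : (flipEquiv ⁻¹' {a} : Set (Fin 2 → Bool)) = {flipSnd a} := by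
    ext f
    simp only [Set.mem_preimage, Set.mem_singleton_iff]
    constructor
    · intro h; rw [← h]; exact (flipSnd_flipSnd f).symm
    · intro h; rw [h]; exact flipSnd_flipSnd a
  rw [this]
  simp [PMF.toMeasure_apply_singleton _ _ (measurableSet_singleton _)]

lemma loss_sum (c : ℝ) (hc : c ∈ Set.Ioo (0 : ℝ) (1 / 2)) (n : ℕ) (hn : 4 ≤ n)
    (x : Fin n → Fin 2) (hx : x ∈ goodSet n) (f h : Fin 2 → Bool) (a : Fin n → ℝ)
    (ha : ∀ i, a i ∈ Set.Icc (0 : ℝ) 1) :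
    2 * (c * (1 / 2) + c / Real.sqrt n) ≤
      selLossFrac01 c x f h a + selLossFrac01 c x (flipSnd f) h a := by
  have hn' : (4 : ℝ) ≤ n := by exact_mod_cast hn
  have hpos : (0 : ℝ) < n := by linarith
  have hs : 0 < Real.sqrt n := Real.sqrt_pos.2 hpos
  have hS : 2 * Real.sqrt n ≤ signSum x := by simpa [goodSet] using hx
  obtain ⟨hc0, hc1⟩ := hc
  rw [selLossFrac01, selLossFrac01, ← mul_add, ← Finset.sum_add_distrib]
  have key : ∑ i, (c * (1 + sgn2 (x i))) ≤
      ∑ i, (c * a i + (1 - a i) * loss01 (f (x i)) (h (x i)) +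
        (c * a i + (1 - a i) * loss01 (flipSnd f (x i)) (h (x i)))) := by
    refine Finset.sum_le_sum fun i _ => ?_
    obtain ⟨h0, h1⟩ := ha i
    generalize x i = y
    have hl : ∀ p q, 0 ≤ loss01 p q := by intro p q; unfold loss01; split_ifs <;> norm_num
    fin_cases y
    · have e1 := mul_nonneg (sub_nonneg.2 h1) (hl (f 0) (h 0))
      have e2 := mul_nonneg (sub_nonneg.2 h1) (hl (flipSnd f 0) (h 0))
      have e3 := mul_nonneg hc0.le h0
      simp [sgn2] at *
      linarith
    · have e : loss01 (f 1) (h 1) + loss01 (flipSnd f 1) (h 1) = 1 := by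
        simp only [flipSnd, loss01, Matrix.cons_val_one, Matrix.cons_val_fin_one]
        cases f 1 <;> cases h 1 <;> simp
      have e4 : loss01 (flipSnd f 1) (h 1) = 1 - loss01 (f 1) (h 1) := by linarith
      simp only [sgn2, Fin.mk_one, Matrix.cons_val_one, Matrix.cons_val_fin_one, e4]
      nlinarith [mul_nonneg (sub_nonneg.2 h1) (sub_nonneg.2 hc1.le)]
  have hsum : ∑ i, (c * (1 + sgn2 (x i))) = c * (n + signSum x) := by
    rw [← Finset.mul_sum, Finset.sum_add_distrib]; simp [signSum]
  rw [hsum] at key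
  have h1 : c * (n + 2 * Real.sqrt n) ≤ c * (n + signSum x) :=
    mul_le_mul_of_nonneg_left (by linarith) hc0.le
  refine le_trans ?_ (mul_le_mul_of_nonneg_left (h1.trans key) (by positivity))
  apply le_of_eq
  have h3 : Real.sqrt n / n = 1 / Real.sqrt n := by
    rw [div_eq_div_iff hpos.ne' hs.ne', Real.mul_self_sqrt hpos.le]; ring
  calc 2 * (c * (1 / 2) + c / Real.sqrt n) = c + 2 * c * (1 / Real.sqrt n) := by ring
    _ = c + 2 * c * (Real.sqrt n / n) := by rw [h3]
    _ = _ := by field_simp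

/-- High-probability lower bound: with `X = {1,2}`, `F` all four binary functions on `X`,
`P` the point mass at `1`, `Q` uniform on `X` (so `|P−Q|_TV = 1/2`), and `μ` uniform on `F`,
every (possibly randomized, with seed from an arbitrary probability space `Ω`) transductive
selective classification algorithm `L` incurs loss at least `c·|P−Q|_TV + c/√n` with
probability at least `κ`. -/
theorem stmt_11 :
    ∃ κ : ℝ, 0 < κ ∧
      ∀ (c : ℝ), c ∈ Set.Ioo (0 : ℝ) (1 / 2) →
      ∀ (n : ℕ), 4 ≤ n →
      ∀ (Ω : Type) (_ : MeasurableSpace Ω) (ω : Measure Ω), IsProbabilityMeasure ω →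
      ∀ L : (Fin n → Fin 2) → (Fin n → Bool) → (Fin n → Fin 2) → Ω →
          (Fin 2 → Bool) × (Fin n → ℝ),
        (∀ xb yb x w i, (L xb yb x w).2 i ∈ Set.Icc (0 : ℝ) 1) →
        ENNReal.ofReal κ ≤
          ((((PMF.uniformOfFintype (Fin 2 → Bool)).toMeasure.prod
                  (Measure.pi fun _ : Fin n => (PMF.pure (0 : Fin 2)).toMeasure)).prod
                (Measure.pi fun _ : Fin n =>
                  (PMF.uniformOfFintype (Fin 2)).toMeasure)).prod ω)
            {q : (((Fin 2 → Bool) × (Fin n → Fin 2)) × (Fin n → Fin 2)) × Ω |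
              c * (1 / 2) + c / Real.sqrt n ≤
                selLossFrac01 c q.1.2 q.1.1.1
                  (L q.1.1.2 (fun i => q.1.1.1 (q.1.1.2 i)) q.1.2 q.2).1
                  (L q.1.1.2 (fun i => q.1.1.1 (q.1.1.2 i)) q.1.2 q.2).2} := by
  refine ⟨Real.exp (-50) / 2, by positivity, ?_⟩
  intro c hc n hn Ω _ ω hω L hL
  set ν := (Measure.pi fun _ : Fin n => (PMF.pure (0 : Fin 2)).toMeasure) with hν
  set ρ := (Measure.pi fun _ : Fin n => (PMF.uniformOfFintype (Fin 2)).toMeasure) with hρ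
  set U := (PMF.uniformOfFintype (Fin 2 → Bool)).toMeasure with hU
  set E := {q : (((Fin 2 → Bool) × (Fin n → Fin 2)) × (Fin n → Fin 2)) × Ω |
              c * (1 / 2) + c / Real.sqrt n ≤
                selLossFrac01 c q.1.2 q.1.1.1
                  (L q.1.1.2 (fun i => q.1.1.1 (q.1.1.2 i)) q.1.2 q.2).1
                  (L q.1.1.2 (fun i => q.1.1.1 (q.1.1.2 i)) q.1.2 q.2).2} with hE
  let φ : ((((Fin 2 → Bool) × (Fin n → Fin 2)) × (Fin n → Fin 2)) × Ω) ≃ᵐ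
      ((((Fin 2 → Bool) × (Fin n → Fin 2)) × (Fin n → Fin 2)) × Ω) :=
    ((flipEquiv.prodCongr (MeasurableEquiv.refl _)).prodCongr (MeasurableEquiv.refl _)).prodCongr
      (MeasurableEquiv.refl _)
  have hφ : MeasurePreserving φ (((U.prod ν).prod ρ).prod ω) (((U.prod ν).prod ρ).prod ω) :=
    ((flip_mp.prod (MeasurePreserving.id ν)).prod (MeasurePreserving.id ρ)).prod
      (MeasurePreserving.id ω)
  have hpre : (((U.prod ν).prod ρ).prod ω) (φ ⁻¹' E) = (((U.prod ν).prod ρ).prod ω) E :=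
    hφ.measure_preimage_equiv E
  have hsub : ((Set.univ ×ˢ {fun _ => 0}) ×ˢ (goodSet n : Set (Fin n → Fin 2))) ×ˢ Set.univ
      ⊆ E ∪ φ ⁻¹' E := by
    rintro ⟨⟨⟨f, xb⟩, x⟩, w⟩ hq
    simp only [Set.mem_prod, Set.mem_univ, Set.mem_singleton_iff, true_and, and_true,
      Finset.mem_coe] at hq
    obtain ⟨rfl, hx⟩ := hq
    by_contra hcon
    rw [Set.mem_union, not_or] at hcon
    obtain ⟨hc1, hc2⟩ := hcon
    have h2 : ¬ (c * (1 / 2) + c / Real.sqrt n ≤ selLossFrac01 c x (flipSnd f)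
        (L (fun _ => 0) (fun _ => f 0) x w).1 (L (fun _ => 0) (fun _ => f 0) x w).2) := hc2
    have h1 : ¬ (c * (1 / 2) + c / Real.sqrt n ≤ selLossFrac01 c x f
        (L (fun _ => 0) (fun _ => f 0) x w).1 (L (fun _ => 0) (fun _ => f 0) x w).2) := hc1
    have := loss_sum c hc n hn x hx f (L (fun _ => 0) (fun _ => f 0) x w).1
      (L (fun _ => 0) (fun _ => f 0) x w).2 (hL _ _ _ _)
    rw [not_le] at h1 h2
    linarith
  have hν1 : ν {fun _ => 0} = 1 := by
    rw [hν, Measure.pi_singleton]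
    simp [PMF.toMeasure_apply_singleton _ _ (measurableSet_singleton _)]
  have hA : (((U.prod ν).prod ρ).prod ω)
      (((Set.univ ×ˢ {fun _ => 0}) ×ˢ (goodSet n : Set (Fin n → Fin 2))) ×ˢ Set.univ)
      = ρ (goodSet n : Set (Fin n → Fin 2)) := by
    rw [Measure.prod_prod, Measure.prod_prod, Measure.prod_prod, hν1]
    simp [hU]
  have h1 : ENNReal.ofReal (Real.exp (-50)) ≤ 2 * (((U.prod ν).prod ρ).prod ω) E :=
    calc _ ≤ ρ (goodSet n : Set (Fin n → Fin 2)) := good_measure n hn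
      _ = _ := hA.symm
      _ ≤ (((U.prod ν).prod ρ).prod ω) (E ∪ φ ⁻¹' E) := measure_mono hsub
      _ ≤ _ := measure_union_le _ _
      _ = _ := by rw [hpre, two_mul]
  rw [ENNReal.ofReal_div_of_pos (by norm_num)]
  refine ENNReal.div_le_of_le_mul' ?_
  simpa using h1
end

section
/- Let F be a class of functions X → {0,1}, let h ∈ F, x̄ ∈ X^n, ȳ := h(x̄) ∈ {0,1}^n, x ∈ X^n, and a ∈ [0,1]^n. Let ĝ ∈ F be any minimizer over g ∈ F of the weighted empirical 0-1 loss Σ_{i=1}^n 4n²·1[g(x̄_i) ≠ ȳ_i] + Σ_{i=1}^n ⌊3n(1 − a_i)⌋·1[g(x_i) ≠ 1 − h(x_i)]. Then ĝ ∈ VS(x̄, ȳ) and ℓ_x(ĝ, h, a) ≥ L_x(VS(x̄, ȳ), h, a) − 1/(3n). -/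
open Finset

/-- `L_x(V,h,a) = sup_{g ∈ V} ℓ_x(g,h,a)` (0-1 base loss). -/
noncomputable def worstSelLossFrac01 {X : Type*} (c : ℝ) {n : ℕ}
    (x : Fin n → X) (V : Set (X → Bool)) (h : X → Bool) (a : Fin n → ℝ) : ℝ :=
  ⨆ g ∈ V, selLossFrac01 c x g h a

/-- The FLIP weighted empirical error: `4n²` copies of each training example `(x̄_i, ȳ_i)`
and `⌊3n(1 − a_i)⌋` copies of each flipped test example `(x_i, 1 − h(x_i))`. -/
noncomputable def flipWeight {X : Type*} {n : ℕ} (xb : Fin n → X) (yb : Fin n → Bool)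
    (x : Fin n → X) (h : X → Bool) (a : Fin n → ℝ) (g : X → Bool) : ℕ :=
  (∑ i, 4 * n ^ 2 * (if g (xb i) = yb i then 0 else 1)) +
    ∑ i, ⌊3 * (n : ℝ) * (1 - a i)⌋₊ * (if g (x i) = !(h (x i)) then 0 else 1)

theorem stmt_12 {X : Type*} [Countable X]
    (F : Set (X → Bool)) (c : ℝ) (hc : c ∈ Set.Ioc (0 : ℝ) 1)
    {n : ℕ} (hn : 0 < n)
    (h : X → Bool) (hhF : h ∈ F)
    (xb : Fin n → X) (x : Fin n → X) (a : Fin n → ℝ)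
    (ha01 : ∀ i, a i ∈ Set.Icc (0 : ℝ) 1)
    (ghat : X → Bool) (hghatF : ghat ∈ F)
    (hmin : ∀ g ∈ F,
      flipWeight xb (fun i => h (xb i)) x h a ghat ≤
        flipWeight xb (fun i => h (xb i)) x h a g) :
    ghat ∈ VS F xb (fun i => h (xb i)) ∧
      worstSelLossFrac01 c x (VS F xb fun i => h (xb i)) h a - 1 / (3 * n) ≤
        selLossFrac01 c x ghat h a := by
  classical
  have hn' : (0 : ℝ) < n := by exact_mod_cast hn
  set w : Fin n → ℕ := fun i => ⌊3 * (n : ℝ) * (1 - a i)⌋₊ with hw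
  have hw1 : ∀ i, (w i : ℝ) ≤ 3 * n * (1 - a i) := fun i =>
    Nat.floor_le (mul_nonneg (by positivity) (by linarith [(ha01 i).2]))
  have hw2 : ∀ i, 3 * n * (1 - a i) < (w i : ℝ) + 1 := fun i => Nat.lt_floor_add_one _
  have hw3 : ∀ i, w i ≤ 3 * n := by
    intro i
    have h1 := hw1 i
    have h2 : 3 * (n : ℝ) * (1 - a i) ≤ 3 * n := by
      nlinarith [(ha01 i).1]
    have : (w i : ℝ) ≤ ((3 * n : ℕ) : ℝ) := by push_cast; linarith
    exact_mod_cast this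
  have hsum : ∀ g : X → Bool,
      ∑ i, w i * (if g (x i) = !(h (x i)) then 0 else 1) ≤ 3 * n ^ 2 := by
    intro g
    calc ∑ i, w i * (if g (x i) = !(h (x i)) then 0 else 1) ≤ ∑ _i : Fin n, 3 * n := by
          refine Finset.sum_le_sum fun i _ => ?_
          have := hw3 i
          split_ifs <;> omega
      _ = 3 * n ^ 2 := by simp; ring
  have hVS : ghat ∈ VS F xb (fun i => h (xb i)) := by
    refine ⟨hghatF, fun j => ?_⟩
    by_contra hj
    have h1 := hmin h hhF
    have h2 : flipWeight xb (fun i => h (xb i)) x h a h ≤ 3 * n ^ 2 := by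
      have := hsum h
      simp only [flipWeight]
      simpa using this
    have h3 : 4 * n ^ 2 ≤ flipWeight xb (fun i => h (xb i)) x h a ghat := by
      unfold flipWeight
      refine le_trans ?_ (Nat.le_add_right _ _)
      have := Finset.single_le_sum
        (f := fun i => 4 * n ^ 2 * (if ghat (xb i) = h (xb i) then 0 else 1))
        (fun i _ => Nat.zero_le _) (Finset.mem_univ j)
      simpa [hj] using this
    have : 0 < n ^ 2 := by positivity
    omega
  refine ⟨hVS, ?_⟩
  have hl0 : ∀ y z, 0 ≤ loss01 y z := by
    intro y z; unfold loss01; split_ifs <;> norm_num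
  have hl1 : ∀ y z, loss01 y z ≤ 1 := by
    intro y z; unfold loss01; split_ifs <;> norm_num
  have hpos : 0 ≤ selLossFrac01 c x ghat h a := by
    unfold selLossFrac01
    refine mul_nonneg (by positivity) (Finset.sum_nonneg fun i _ => ?_)
    exact add_nonneg (mul_nonneg hc.1.le (ha01 i).1)
      (mul_nonneg (by linarith [(ha01 i).2]) (hl0 _ _))
  have hpos' : 0 ≤ selLossFrac01 c x ghat h a + 1 / (3 * n) := by positivity
  rw [sub_le_iff_le_add]
  unfold worstSelLossFrac01
  refine Real.iSup_le (fun g => Real.iSup_le (fun hg => ?_) hpos') hpos'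
  have hflip : ∀ g ∈ VS F xb (fun i => h (xb i)),
      ((flipWeight xb (fun i => h (xb i)) x h a g : ℕ) : ℝ)
        = ∑ i, (w i : ℝ) * (1 - loss01 (g (x i)) (h (x i))) := by
    intro g hg
    have h0 : ∀ i, g (xb i) = h (xb i) := hg.2
    unfold flipWeight
    push_cast
    simp only [h0, if_true, mul_zero, Finset.sum_const_zero, zero_add]
    refine Finset.sum_congr rfl fun i _ => ?_
    unfold loss01
    cases g (x i) <;> cases h (x i) <;> simp [hw]
  have hm : (flipWeight xb (fun i => h (xb i)) x h a ghat : ℝ)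
      ≤ flipWeight xb (fun i => h (xb i)) x h a g := by exact_mod_cast hmin g hg.1
  rw [hflip g hg, hflip ghat hVS] at hm
  have key : ∑ i, 3 * (n : ℝ) * (c * a i + (1 - a i) * loss01 (g (x i)) (h (x i))) ≤
      ∑ i, (3 * (n : ℝ) * (c * a i + (1 - a i) * loss01 (ghat (x i)) (h (x i)))
        + (w i * (1 - loss01 (ghat (x i)) (h (x i)))
            - w i * (1 - loss01 (g (x i)) (h (x i)))) + 1) := by
    refine Finset.sum_le_sum fun i _ => ?_
    have e1 := mul_nonneg (sub_nonneg.2 (hw1 i)) (hl0 (ghat (x i)) (h (x i)))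
    have e2 := mul_nonneg (sub_nonneg.2 (hw2 i).le) (hl0 (g (x i)) (h (x i)))
    have e3 := hl1 (g (x i)) (h (x i))
    nlinarith
  rw [Finset.sum_add_distrib, Finset.sum_add_distrib, Finset.sum_sub_distrib,
    ← Finset.mul_sum, ← Finset.mul_sum] at key
  simp only [Finset.sum_const, Finset.card_univ, Fintype.card_fin, nsmul_eq_mul, mul_one] at key
  unfold selLossFrac01
  set A := ∑ i, (c * a i + (1 - a i) * loss01 (g (x i)) (h (x i)))
  set B := ∑ i, (c * a i + (1 - a i) * loss01 (ghat (x i)) (h (x i)))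
  have hAB : A ≤ B + 1 / 3 := by
    by_contra hcon
    push Not at hcon
    nlinarith
  calc 1 / (n : ℝ) * A ≤ 1 / n * (B + 1 / 3) := by gcongr
    _ = 1 / n * B + 1 / (3 * n) := by field_simp
end

section
/- Let Y = [−1, 1], let F be a convex class of functions X → Y (i.e., αf + (1−α)g ∈ F for all f, g ∈ F and α ∈ [0,1]), let (x̄_1, y_1), …, (x̄_n, y_n) ∈ X × Y, and let h ∈ F minimize the empirical squared loss g ↦ (1/n)·Σ_i (y_i − g(x̄_i))² over F. Then for every f ∈ F: (1/n)·Σ_{i=1}^n (f(x̄_i) − h(x̄_i))² ≤ (1/n)·Σ_{i=1}^n (y_i − f(x̄_i))² − (1/n)·Σ_{i=1}^n (y_i − h(x̄_i))². -/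
open Finset

theorem stmt_13 {X : Type*}
    (F : Set (X → ℝ))
    (hFrange : ∀ g ∈ F, ∀ t : X, g t ∈ Set.Icc (-1 : ℝ) 1)
    (hFconvex : ∀ f ∈ F, ∀ g ∈ F, ∀ α ∈ Set.Icc (0 : ℝ) 1,
      (fun t => α * f t + (1 - α) * g t) ∈ F)
    {n : ℕ} (hn : 0 < n)
    (xb : Fin n → X) (y : Fin n → ℝ) (hy : ∀ i, y i ∈ Set.Icc (-1 : ℝ) 1)
    (h : X → ℝ) (hhF : h ∈ F)
    (hERM : ∀ g ∈ F,
      (1 / (n : ℝ)) * ∑ i, (y i - h (xb i)) ^ 2 ≤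
        (1 / (n : ℝ)) * ∑ i, (y i - g (xb i)) ^ 2)
    (f : X → ℝ) (hfF : f ∈ F) :
    (1 / (n : ℝ)) * ∑ i, (f (xb i) - h (xb i)) ^ 2 ≤
      (1 / (n : ℝ)) * ∑ i, (y i - f (xb i)) ^ 2 -
        (1 / (n : ℝ)) * ∑ i, (y i - h (xb i)) ^ 2 := by
  have key : ∀ α ∈ Set.Icc (0 : ℝ) 1,
      (1 / (n : ℝ)) * ∑ i, (y i - (α * f (xb i) + (1 - α) * h (xb i))) ^ 2 =
        α * ((1 / (n : ℝ)) * ∑ i, (y i - f (xb i)) ^ 2)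
        + (1 - α) * ((1 / (n : ℝ)) * ∑ i, (y i - h (xb i)) ^ 2)
        - α * (1 - α) * ((1 / (n : ℝ)) * ∑ i, (f (xb i) - h (xb i)) ^ 2) := by
    intro α _
    simp only [Finset.mul_sum, ← Finset.sum_add_distrib, ← Finset.sum_sub_distrib]
    refine Finset.sum_congr rfl fun i _ => ?_
    ring
  have hle : ∀ α ∈ Set.Icc (0 : ℝ) 1, _ := fun α hα =>
    (hERM _ (hFconvex f hfF h hhF α hα)).trans_eq (key α hα)
  have hAB := hERM f hfF
  clear key
  generalize (1 / (n : ℝ)) * ∑ i, (y i - f (xb i)) ^ 2 = B at *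
  generalize (1 / (n : ℝ)) * ∑ i, (y i - h (xb i)) ^ 2 = A at *
  generalize (1 / (n : ℝ)) * ∑ i, (f (xb i) - h (xb i)) ^ 2 = D at *
  by_contra hcon
  push Not at hcon
  have hD : 0 < D := by linarith
  have hpos : 0 < (D - (B - A)) / (2 * D) := div_pos (by linarith) (by linarith)
  have hα1 : (D - (B - A)) / (2 * D) ≤ 1 := by
    rw [div_le_one (by linarith)]; linarith
  have h1 := hle _ ⟨hpos.le, hα1⟩
  have h2 : (D - (B - A)) / (2 * D) * D = (D - (B - A)) / 2 := by field_simp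
  generalize (D - (B - A)) / (2 * D) = α at *
  have h3 : 0 ≤ α * ((B - A) - (D - α * D)) := by linarith
  have h4 : 0 ≤ (B - A) - (D - α * D) := nonneg_of_mul_nonneg_right h3 hpos
  linarith
end

section
/- Let F be a class of functions X → {0,1} of VC dimension d, let f ∈ F, let P be a probability distribution on the countable set X, and let k ≥ 1 be an integer. Then for independent samples x̄, z ~ P^n: Pr[ there exists g ∈ F with g(x̄_i) = f(x̄_i) for all i ≤ n and |{i ≤ n : g(z_i) ≠ f(z_i)}| ≥ k ] ≤ (2n)^d · 2^{−k}. -/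
open Finset MeasureTheory

lemma aux_sum (m : ℕ) (hm : 1 ≤ m) (d : ℕ) :
    ∑ i ∈ Finset.range d, m.choose (i + 1) ≤ m ^ d := by
  induction d with
  | zero => simp
  | succ d ih =>
    rw [Finset.sum_range_succ]
    rcases Nat.eq_zero_or_pos d with rfl | hd
    · simp
    have h1 : m.choose (d + 1) ≤ m ^ d * (m - 1) := by
      obtain ⟨r, rfl⟩ : ∃ r, m = r + 1 := ⟨m - 1, by omega⟩
      have h := Nat.add_one_mul_choose_eq r d
      have h2 : r.choose d ≤ r ^ d := Nat.choose_le_pow r d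
      have h3 : r ^ d ≤ (r + 1) ^ (d - 1) * r := by
        obtain ⟨e, rfl⟩ : ∃ e, d = e + 1 := ⟨d - 1, by omega⟩
        rw [pow_succ]
        simp only [Nat.add_sub_cancel]
        gcongr
        omega
      have h4 : (r + 1) ^ d = (r + 1) ^ (d - 1) * (r + 1) := by
        rw [← pow_succ]; congr 1; omega
      have h5 : (r + 1).choose (d + 1) ≤ (r + 1).choose (d + 1) * (d + 1) :=
        Nat.le_mul_of_pos_right _ (by omega)
      simp only [Nat.add_sub_cancel]
      calc (r + 1).choose (d + 1) ≤ (r + 1) * r.choose d := by omega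
        _ ≤ (r + 1) * ((r + 1) ^ (d - 1) * r) := by gcongr; omega
        _ = (r + 1) ^ d * r := by rw [h4]; ring
    calc _ ≤ m ^ d + m ^ d * (m - 1) := by gcongr
      _ = m ^ (d + 1) := by
        obtain ⟨r, rfl⟩ : ∃ r, m = r + 1 := ⟨m - 1, by omega⟩
        simp only [Nat.add_sub_cancel]
        ring

open Classical in
lemma aux_sauer {X α : Type*} [Fintype α] [Nonempty α] (F : Set (X → Bool)) (d : ℕ)
    (hVC : ∀ S : Finset X, Shatters F S → S.card ≤ d)
    (f : X → Bool) (hf : f ∈ F) (y : α → X) (𝒜 : Finset (Finset α))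
    (h𝒜 : ∀ A, A ∈ 𝒜 ↔ ∃ g ∈ F, ∀ a, a ∈ A ↔ g (y a) ≠ f (y a)) :
    (𝒜.erase ∅).card ≤ (Fintype.card α) ^ d := by
  have hv : 𝒜.vcDim ≤ d := by
    refine Finset.sup_le fun s hs => ?_
    have hs' : 𝒜.Shatters s := Finset.mem_shatterer.1 hs
    have hinj : Set.InjOn y s := by
      intro a ha b hb hab
      by_contra hne
      obtain ⟨A, hA, hAs⟩ := hs' (t := {a}) (by simpa using ha)
      obtain ⟨g, -, hg⟩ := (h𝒜 A).1 hA
      have h1 : a ∈ A := by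
        have : a ∈ s ∩ A := by rw [hAs]; simp
        exact (Finset.mem_inter.1 this).2
      have h2 : b ∈ A := by rw [hg, ← hab, ← hg]; exact h1
      have h3 : b ∈ s ∩ A := Finset.mem_inter.2 ⟨hb, h2⟩
      rw [hAs, Finset.mem_singleton] at h3
      exact hne h3.symm
    rw [← Finset.card_image_of_injOn hinj]
    apply hVC
    intro b
    obtain ⟨A, hA, hAs⟩ := hs' (t := s.filter fun a => b (y a) ≠ f (y a)) (Finset.filter_subset _ _)
    obtain ⟨g, hgF, hg⟩ := (h𝒜 A).1 hA
    refine ⟨g, hgF, fun x hx => ?_⟩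
    obtain ⟨a, ha, rfl⟩ := Finset.mem_image.1 hx
    have h1 : a ∈ s ∩ A ↔ a ∈ s.filter fun a => b (y a) ≠ f (y a) := by rw [hAs]
    simp only [Finset.mem_inter, Finset.mem_filter, ha, true_and, hg] at h1
    revert h1
    cases g (y a) <;> cases b (y a) <;> cases f (y a) <;> simp
  have h0 : ∅ ∈ 𝒜 := (h𝒜 ∅).2 ⟨f, hf, by simp⟩
  have hc : 𝒜.card ≤ ∑ k ∈ Finset.range (d + 1), (Fintype.card α).choose k := by
    refine (Finset.card_le_card_shatterer 𝒜).trans (Finset.card_shatterer_le_sum_vcDim.trans ?_)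
    apply Finset.sum_le_sum_of_subset
    intro i hi
    simp only [Finset.mem_Iic, Finset.mem_range] at hi ⊢
    omega
  rw [Finset.sum_range_succ'] at hc
  have := aux_sum (Fintype.card α) Fintype.card_pos d
  rw [Finset.card_erase_of_mem h0]
  simp only [Nat.choose_zero_right] at hc
  omega

lemma aux_count {n : ℕ} (A : Finset (Fin n × Bool)) (k : ℕ) :
    (univ.filter fun σ : Fin n → Bool => (∀ i, (i, σ i) ∉ A) ∧
      k ≤ (univ.filter fun i => (i, !σ i) ∈ A).card).card * 2 ^ k ≤ 2 ^ n := by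
  set B := univ.filter fun σ : Fin n → Bool => (∀ i, (i, σ i) ∉ A) ∧
      k ≤ (univ.filter fun i => (i, !σ i) ∈ A).card with hB
  rcases B.eq_empty_or_nonempty with h | ⟨σ₀, h₀⟩
  · simp [h]
  have h₀' := (Finset.mem_filter.1 h₀).2
  set I := univ.filter fun i => (i, !σ₀ i) ∈ A with hI
  have hsub : B ⊆ Fintype.piFinset (fun i => if i ∈ I then ({σ₀ i} : Finset Bool) else univ) := by
    intro σ hσ
    have hσ' := (Finset.mem_filter.1 hσ).2
    rw [Fintype.mem_piFinset]
    intro i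
    split_ifs with hi
    · have h1 := (Finset.mem_filter.1 hi).2
      have h2 := hσ'.1 i
      rw [Finset.mem_singleton]
      by_contra hne
      have : σ i = !σ₀ i := by
        revert hne; cases σ i <;> cases σ₀ i <;> simp
      rw [this] at h2
      exact h2 h1
    · simp
  have hcard := Finset.card_le_card hsub
  rw [Fintype.card_piFinset] at hcard
  have hp : ∏ i : Fin n, (if i ∈ I then ({σ₀ i} : Finset Bool) else univ).card = 2 ^ (Iᶜ.card) := by
    have : ∀ i : Fin n, (if i ∈ I then ({σ₀ i} : Finset Bool) else univ).card
        = if i ∈ Iᶜ then 2 else 1 := by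
      intro i
      by_cases hi : i ∈ I <;> simp [hi]
    rw [Finset.prod_congr rfl fun i _ => this i, Finset.prod_ite_mem]
    simp
  rw [hp] at hcard
  have hI2 : Iᶜ.card + I.card = n := by
    have := Finset.card_compl_add_card I
    simpa using this
  calc B.card * 2 ^ k ≤ 2 ^ Iᶜ.card * 2 ^ I.card := by
        gcongr
        · norm_num
        · exact h₀'.2
    _ = 2 ^ n := by rw [← pow_add, hI2]

open Classical in
lemma aux_sigma {X : Type*} (F : Set (X → Bool)) (d : ℕ)
    (hVC : ∀ S : Finset X, Shatters F S → S.card ≤ d)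
    (f : X → Bool) (hf : f ∈ F) {n : ℕ} (hn : 0 < n) (k : ℕ) (hk : 1 ≤ k)
    (y : Fin n × Bool → X) :
    (univ.filter fun σ : Fin n → Bool => ∃ g ∈ F, (∀ i, g (y (i, σ i)) = f (y (i, σ i))) ∧
      k ≤ (univ.filter fun i => g (y (i, !σ i)) ≠ f (y (i, !σ i))).card).card * 2 ^ k
      ≤ (2 * n) ^ d * 2 ^ n := by
  haveI : Nonempty (Fin n) := ⟨⟨0, hn⟩⟩
  set 𝒜 : Finset (Finset (Fin n × Bool)) :=
    univ.filter fun A => ∃ g ∈ F, ∀ a, a ∈ A ↔ g (y a) ≠ f (y a) with h𝒜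
  have hS := aux_sauer F d hVC f hf y 𝒜 (fun A => by simp [h𝒜])
  have hsub : (univ.filter fun σ : Fin n → Bool =>
      ∃ g ∈ F, (∀ i, g (y (i, σ i)) = f (y (i, σ i))) ∧
      k ≤ (univ.filter fun i => g (y (i, !σ i)) ≠ f (y (i, !σ i))).card) ⊆
      (𝒜.erase ∅).biUnion fun A => univ.filter fun σ : Fin n → Bool => (∀ i, (i, σ i) ∉ A) ∧
      k ≤ (univ.filter fun i => (i, !σ i) ∈ A).card := by
    intro σ hσ
    obtain ⟨g, hg, h1, h2⟩ := (Finset.mem_filter.1 hσ).2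
    rw [Finset.mem_biUnion]
    refine ⟨univ.filter fun a => g (y a) ≠ f (y a), ?_, ?_⟩
    · rw [Finset.mem_erase]
      constructor
      · intro he
        obtain ⟨i, hi⟩ := Finset.card_pos.1 (lt_of_lt_of_le hk h2)
        have : (i, !σ i) ∈ univ.filter fun a => g (y a) ≠ f (y a) := by
          simpa using hi
        rw [he] at this
        simp at this
      · rw [h𝒜, Finset.mem_filter]
        exact ⟨Finset.mem_univ _, g, hg, by simp⟩
    · rw [Finset.mem_filter]
      refine ⟨Finset.mem_univ _, fun i => by simp [h1 i], ?_⟩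
      simpa using h2
  calc _ ≤ (∑ A ∈ 𝒜.erase ∅, (univ.filter fun σ : Fin n → Bool => (∀ i, (i, σ i) ∉ A) ∧
      k ≤ (univ.filter fun i => (i, !σ i) ∈ A).card).card) * 2 ^ k := by
        gcongr
        convert (Finset.card_le_card hsub).trans Finset.card_biUnion_le
    _ ≤ ∑ A ∈ 𝒜.erase ∅, 2 ^ n := by
        rw [Finset.sum_mul]
        apply Finset.sum_le_sum
        intro A _
        convert aux_count A k
    _ ≤ (2 * n) ^ d * 2 ^ n := by
        rw [Finset.sum_const, smul_eq_mul]
        gcongr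
        have hS' := hS
        rw [Fintype.card_prod, Fintype.card_fin, Fintype.card_bool, mul_comm n 2] at hS'
        refine le_trans (le_of_eq ?_) hS'
        congr!

/-- Coordinatewise swap. -/
def auxSwap {X : Type*} {n : ℕ} (σ : Fin n → Bool) (q : Fin n → X × X) : Fin n → X × X :=
  fun i => (if σ i then Prod.swap else id) (q i)

lemma auxSwap_mp {X : Type*} [MeasurableSpace X] (μ : Measure X) [IsProbabilityMeasure μ]
    {n : ℕ} (σ : Fin n → Bool) :
    MeasurePreserving (auxSwap (X := X) σ) (Measure.pi fun _ : Fin n => μ.prod μ)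
      (Measure.pi fun _ : Fin n => μ.prod μ) := by
  apply measurePreserving_pi (fun _ : Fin n => μ.prod μ) (fun _ : Fin n => μ.prod μ)
    (f := fun i => if σ i then Prod.swap else id)
  intro i
  cases σ i
  · simpa using MeasurePreserving.id _
  · simpa using Measure.measurePreserving_swap

open Classical in
lemma aux_avg {Ω ι : Type*} [MeasurableSpace Ω] [DiscreteMeasurableSpace Ω] [Fintype ι]
    (μ : Measure Ω) [IsProbabilityMeasure μ] (T : ι → Ω → Ω)
    (hT : ∀ s, MeasurePreserving (T s) μ μ) (E : Set Ω) (a b : ℕ)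
    (h : ∀ q, (univ.filter fun s => T s q ∈ E).card * a ≤ b) :
    Fintype.card ι * μ E * a ≤ b := by
  have h1 : (Fintype.card ι : ENNReal) * μ E = ∫⁻ q, ((univ.filter fun s => T s q ∈ E).card : ENNReal) ∂μ := by
    have : ∀ q, ((univ.filter fun s => T s q ∈ E).card : ENNReal)
        = ∑ s, (T s ⁻¹' E).indicator 1 q := by
      intro q
      simp [Set.indicator_apply]
    simp_rw [this]
    rw [lintegral_finsetSum _ (fun _ _ => Measurable.of_discrete)]
    simp_rw [lintegral_indicator_one (MeasurableSet.of_discrete)]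
    rw [Finset.sum_congr rfl fun s _ => (hT s).measure_preimage (MeasurableSet.of_discrete (s := E)).nullMeasurableSet]
    simp
  rw [h1, ← lintegral_mul_const _ Measurable.of_discrete]
  calc _ ≤ ∫⁻ _, (b : ENNReal) ∂μ := by
        apply lintegral_mono
        intro q
        show ((univ.filter fun s => T s q ∈ E).card : ENNReal) * a ≤ b
        exact_mod_cast h q
    _ = b := by simp

theorem stmt_17 {X : Type*} [Countable X] [DecidableEq X]
    [MeasurableSpace X] [DiscreteMeasurableSpace X]
    (F : Set (X → Bool)) (d : ℕ)
    (hVC : ∀ S : Finset X, Shatters F S → S.card ≤ d)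
    (f : X → Bool) (hf : f ∈ F)
    (P : PMF X) {n : ℕ} (hn : 0 < n) (k : ℕ) (hk : 1 ≤ k) :
    ((Measure.pi fun _ : Fin n => P.toMeasure).prod
        (Measure.pi fun _ : Fin n => P.toMeasure))
      {p : (Fin n → X) × (Fin n → X) |
        ∃ g ∈ F, (∀ i, g (p.1 i) = f (p.1 i)) ∧
          k ≤ (univ.filter fun i => g (p.2 i) ≠ f (p.2 i)).card} ≤
      ENNReal.ofReal ((2 * (n : ℝ)) ^ d * (1 / 2) ^ k) := by
  classical
  have hmp := measurePreserving_arrowProdEquivProdArrow X X (Fin n)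
    (fun _ => P.toMeasure) (fun _ => P.toMeasure)
  rw [← hmp.measure_preimage (MeasurableSet.of_discrete).nullMeasurableSet]
  set E := MeasurableEquiv.arrowProdEquivProdArrow X X (Fin n) ⁻¹'
    {p : (Fin n → X) × (Fin n → X) |
        ∃ g ∈ F, (∀ i, g (p.1 i) = f (p.1 i)) ∧
          k ≤ (univ.filter fun i => g (p.2 i) ≠ f (p.2 i)).card} with hE
  have key := aux_avg (Measure.pi fun _ : Fin n => P.toMeasure.prod P.toMeasure)
    (fun σ : Fin n → Bool => auxSwap σ) (fun σ => auxSwap_mp P.toMeasure σ) E (2 ^ k)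
    ((2 * n) ^ d * 2 ^ n) (by
      intro q
      have h := aux_sigma F d hVC f hf hn k hk
        (fun a => if a.2 then (q a.1).2 else (q a.1).1)
      convert h using 6 with σ
      have e1 : ∀ i, (auxSwap σ q i).1 = if σ i then (q i).2 else (q i).1 := by
        intro i; unfold auxSwap; cases σ i <;> rfl
      have e2 : ∀ i, (auxSwap σ q i).2 = if (!σ i) then (q i).2 else (q i).1 := by
        intro i; unfold auxSwap; cases σ i <;> rfl
      simp only [← e1, ← e2]
      rfl)
  set x := (Measure.pi fun _ : Fin n => P.toMeasure.prod P.toMeasure) E with hx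
  have hxt : x ≠ ⊤ := measure_ne_top _ _
  rw [ENNReal.le_ofReal_iff_toReal_le hxt (by positivity)]
  have key2 := ENNReal.toReal_mono (ENNReal.natCast_ne_top _) key
  simp at key2
  have h2n : (0 : ℝ) < 2 ^ n := by positivity
  have h2k : (0 : ℝ) < 2 ^ k := by positivity
  rw [one_div, inv_pow, ← div_eq_mul_inv, le_div_iff₀ h2k]
  nlinarith
end
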